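/- arXiv:1007.1575 — 3 statements merged into one kernel-verified Lean document; each statement's English description precedes it below -/
import Mathlib

section
/- Let A and V be bounded self-adjoint operators on H. Suppose spectrum(A) = ω ∪ Ω for nonempty closed sets ω, Ω with d := dist(ω, Ω) > 0. Let P be the spectral projection of A associated with ω, and assume V is off-diagonal with respect to the decomposition H = Ran P ⊕ ker P, i.e., P V P = 0 and (I − P) V (I − P) = 0. Let c* be the unique positive real number with ∫_0^{c*} (2 − √(1 + 4τ²))^{−1} dτ = 1 (one has c* < √3/2). If ‖V‖ < c* · d, then, with Q the unique orthogonal projection commuting with A + V such that the spectrum of the restriction of A + V to Ran Q is contained in O_{d/2}(ω) and the spectrum of the restriction of A + V to ker Q is contained in O_{d/2}(Ω), one has ‖P − Q‖ ≤ sin( (π/2) ∫_0^{‖V‖/d} (2 − √(1 + 4τ²))^{−1} dτ ) < 1. -/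
open ContinuousLinearMap

/-- The spectral projection of a bounded self-adjoint operator `B` associated with a part `ω`
of its spectrum that is separated from the rest: it is obtained by applying the continuous
functional calculus to the indicator function of `ω`. It is the unique orthogonal projection
commuting with `B` such that the spectrum of the restriction of `B` to its range is contained
in `ω` and the spectrum of the restriction of `B` to its kernel is contained in the complement
part. -/
noncomputable def spectralProj {H : Type*} [NormedAddCommGroup H] [InnerProductSpace ℂ H]
    [CompleteSpace H] (B : H →L[ℂ] H) (ω : Set ℝ) : H →L[ℂ] H :=
  cfc (Set.indicator ω (fun _ => (1:ℝ))) B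

/-- The distance `dist(s,t) = inf{|x − y| : x ∈ s, y ∈ t}` between two sets of reals. -/
noncomputable def setDist (s t : Set ℝ) : ℝ :=
  sInf (Set.image2 dist s t)

/-- A family of sets `{ω_t}_{t ∈ I}` is upper semicontinuous on `I` if for every `t ∈ I` and
`ε > 0` there is `δ > 0` such that `sup_{λ ∈ ω_s} dist(λ, ω_t) < ε` (i.e. `ω_s` is contained
in the open `ε`-neighborhood of `ω_t`) whenever `s ∈ I` and `|s − t| < δ`. -/
def UpperSemicontinuousFamilyOn (ω : ℝ → Set ℝ) (I : Set ℝ) : Prop :=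
  ∀ t ∈ I, ∀ ε > (0:ℝ), ∃ δ > (0:ℝ), ∀ s ∈ I, |s - t| < δ →
    ω s ⊆ Metric.thickening ε (ω t)

/-!
If two parts of the spectra of `B` and `C` are at distance `δ`, with spectral projections `E` and
`F`, then `δ ‖E X F‖ ≤ π / 2 * ‖B X - X C‖`: the coefficients of `E X F` in the spectral
resolutions of `B` and `C` arise from those of `B X - X C` on division by `λ - μ`, and `1 / s` is,
for `|s| ≥ 1`, the sine transform of a function of `L¹`-norm `π / 2`.

An off-diagonal `V` moves the spectrum of `A` by at most `δ`, where `δ (δ + d) = ‖V‖²`: at a point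
at distance more than `δ` from the spectrum, the quadratic forms of the two diagonal entries have
room `δ` and `δ + d`, and the mixed term is absorbed because `‖V‖` is the geometric mean of the two.
Hence along the path `A + t V`, with `τ = t ‖V‖ / d`, the two parts of the spectrum stay at distance
at least `d (2 - √(1 + 4 τ²))`, and the projections turn by an angle of at most `π / 2` times
`dτ / (2 - √(1 + 4 τ²))`. Since `arcsin ‖P - Q‖` is a metric on projections, these infinitesimal
angles add up.
-/

section ExtremalKernel

open MeasureTheory Set Filter
open scoped Real Topology

lemma hasSum_coth (u : ℝ) (hu : 0 < u) :
    HasSum (fun n : ℕ => 2 * u / (u ^ 2 + ((n : ℝ) + 1) ^ 2))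
      (π * (Real.cosh (π * u) / Real.sinh (π * u)) - 1 / u) := by
  have hx : (u * Complex.I : ℂ) ∈ Complex.integerComplement := by
    rintro ⟨n, hn⟩
    have := congrArg Complex.im hn
    simp only [Complex.intCast_im, Complex.mul_im, Complex.ofReal_re, Complex.I_im, mul_one,
      Complex.ofReal_im, Complex.I_re, mul_zero, add_zero] at this
    exact hu.ne this
  have hterm : ∀ n : ℕ, Complex.I * cotTerm (u * Complex.I) n =
      ((2 * u / (u ^ 2 + ((n : ℝ) + 1) ^ 2) : ℝ) : ℂ) := by
    intro n
    have hne : ((u : ℂ) ^ 2 + ((n : ℂ) + 1) ^ 2) ≠ 0 := by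
      exact_mod_cast (by positivity : (u ^ 2 + ((n : ℝ) + 1) ^ 2) ≠ 0)
    have hprod : (u * Complex.I + (n + 1)) * (u * Complex.I - (n + 1)) =
        -((u : ℂ) ^ 2 + ((n : ℂ) + 1) ^ 2) := by
      linear_combination (u : ℂ) ^ 2 * Complex.I_sq
    rw [cotTerm_identity hx, hprod]
    push_cast
    field_simp
    linear_combination -(u : ℂ) * Complex.I_sq
  have hcot : Complex.I * (π * (π * (u * Complex.I)).cot - 1 / (u * Complex.I)) =
      ((π * (Real.cosh (π * u) / Real.sinh (π * u)) - 1 / u : ℝ) : ℂ) := by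
    have hu' : (u : ℂ) ≠ 0 := by exact_mod_cast hu.ne'
    have hsinh : Complex.sinh (π * u) ≠ 0 := by
      exact_mod_cast (Real.sinh_pos_iff.2 (mul_pos Real.pi_pos hu)).ne'
    rw [← mul_assoc, Complex.cot_eq_cos_div_sin, Complex.cos_mul_I, Complex.sin_mul_I]
    push_cast
    field_simp
  have hsum := (summable_cotTerm hx).hasSum.mul_left Complex.I
  rw [← cot_series_rep' hx, hcot] at hsum
  simpa only [hterm, Complex.hasSum_ofReal] using hsum

lemma two_mul_coth_two_mul_sub_coth {x : ℝ} (hx : x ≠ 0) :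
    2 * (Real.cosh (2 * x) / Real.sinh (2 * x)) - Real.cosh x / Real.sinh x = Real.tanh x := by
  have hs : Real.sinh x ≠ 0 := Real.sinh_ne_zero.2 hx
  have hc : Real.cosh x ≠ 0 := (Real.cosh_pos x).ne'
  rw [Real.cosh_two_mul, Real.sinh_two_mul, Real.tanh_eq_sinh_div_cosh]
  field_simp
  ring

lemma hasSum_even_of_hasSum_odd {f : ℕ → ℝ} {a b : ℝ} (hf : HasSum f a)
    (hodd : HasSum (fun n => f (2 * n + 1)) b) : HasSum (fun n => f (2 * n)) (a - b) := by
  have heven : HasSum (fun n => f (2 * n)) (∑' n, f (2 * n)) :=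
    (hf.summable.comp_injective (mul_right_injective₀ two_ne_zero)).hasSum
  rwa [← eq_sub_of_add_eq ((heven.even_add_odd hodd).unique hf)]

-- The terms with even index in the series of `2 coth (π u)` are what remains of it after
-- removing those with odd index, which form the series of `coth (π u / 2)`.
lemma hasSum_tanh (u : ℝ) (hu : 0 < u) :
    HasSum (fun n : ℕ => 4 / π * (u / (u ^ 2 + (2 * (n : ℝ) + 1) ^ 2)))
      (Real.tanh (π * u / 2)) := by
  have hall := (hasSum_coth u hu).mul_left 2
  have hodd : HasSum (fun n : ℕ => 2 * (2 * u / (u ^ 2 + (((2 * n + 1 : ℕ) : ℝ) + 1) ^ 2)))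
      (π * (Real.cosh (π * u / 2) / Real.sinh (π * u / 2)) - 2 / u) := by
    convert hasSum_coth (u / 2) (by positivity) using 1
    · funext n
      push_cast
      have : u ^ 2 + (2 * (n : ℝ) + 1 + 1) ^ 2 ≠ 0 := by positivity
      field_simp
      ring
    · rw [mul_div_assoc π u 2, one_div_div]
  have heven := hasSum_even_of_hasSum_odd hall hodd
  have hval : 1 / π * (2 * (π * (Real.cosh (π * u) / Real.sinh (π * u)) - 1 / u) -
      (π * (Real.cosh (π * u / 2) / Real.sinh (π * u / 2)) - 2 / u)) =
      Real.tanh (π * u / 2) := by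
    rw [← two_mul_coth_two_mul_sub_coth (by positivity : π * u / 2 ≠ 0),
      mul_div_cancel₀ _ (two_ne_zero (α := ℝ))]
    field_simp
    ring
  rw [← hval]
  refine (heven.mul_left (1 / π)).congr_fun fun n => ?_
  push_cast
  ring

lemma hasDerivAt_mul_arctan_div (a : ℝ) {u : ℝ} (hu : 0 < u) :
    HasDerivAt (fun u : ℝ => a * Real.arctan (u / a)) (a ^ 2 / (a ^ 2 + u ^ 2)) u := by
  rcases eq_or_ne a 0 with rfl | ha
  · simpa using hasDerivAt_const u (0 : ℝ)
  · refine (((hasDerivAt_id u).div_const a).arctan.const_mul a).congr_deriv ?_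
    have : a ^ 2 + u ^ 2 ≠ 0 := by positivity
    simp only [id]
    field_simp

lemma tendsto_mul_arctan_div_atTop {a : ℝ} (ha : 0 ≤ a) :
    Tendsto (fun u : ℝ => a * Real.arctan (u / a)) atTop (𝓝 (a * (π / 2))) := by
  rcases ha.eq_or_lt with rfl | ha
  · simp
  · exact ((tendsto_nhds_of_tendsto_nhdsWithin Real.tendsto_arctan_atTop).comp
      (tendsto_id.atTop_div_const ha)).const_mul a

lemma integral_div_sq_add_sq_mul_self {k : ℝ} (hk : 0 < k) :
    IntegrableOn (fun u : ℝ => u / (u ^ 2 + k ^ 2) * (u / (u ^ 2 + k ^ 2))) (Ioi 0) ∧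
      ∫ u in Ioi (0 : ℝ), u / (u ^ 2 + k ^ 2) * (u / (u ^ 2 + k ^ 2)) = π / 2 / (k + k) := by
  set G : ℝ → ℝ := fun u =>
    1 / 2 * (1 / k ^ 2 * (k * Real.arctan (u / k)) - u / (u ^ 2 + k ^ 2)) with hG
  have hnonneg : ∀ u ∈ Ioi (0 : ℝ), 0 ≤ u / (u ^ 2 + k ^ 2) * (u / (u ^ 2 + k ^ 2)) :=
    fun u _ => mul_self_nonneg _
  have hderiv : ∀ u ∈ Ioi (0 : ℝ),
      HasDerivAt G (u / (u ^ 2 + k ^ 2) * (u / (u ^ 2 + k ^ 2))) u := by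
    intro u hu
    have hne : u ^ 2 + k ^ 2 ≠ 0 := by positivity
    have hne' : k ^ 2 + u ^ 2 ≠ 0 := by positivity
    have hquot := (hasDerivAt_id u).div (((hasDerivAt_id u).pow 2).add_const (k ^ 2)) hne
    refine ((((hasDerivAt_mul_arctan_div k hu).const_mul (1 / k ^ 2)).sub hquot).const_mul
      (1 / 2)).congr_deriv ?_
    simp only [id, Pi.pow_apply]
    field_simp
    ring
  have hcont : Continuous G := by
    refine .mul continuous_const (.sub (by fun_prop) (.div (by fun_prop) (by fun_prop) ?_))
    intro u
    positivity
  have hlim : Tendsto G atTop (𝓝 (1 / 2 * (1 / k ^ 2 * (k * (π / 2)) - 0))) := by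
    refine (((tendsto_mul_arctan_div_atTop hk.le).const_mul _).sub ?_).const_mul _
    refine squeeze_zero' (g := fun u : ℝ => u⁻¹) ?_ ?_ tendsto_inv_atTop_zero
    all_goals filter_upwards [eventually_gt_atTop 0] with u hu
    · positivity
    · rw [div_le_iff₀ (by positivity), inv_mul_eq_div, le_div_iff₀ hu]
      nlinarith [sq_nonneg k]
  refine ⟨integrableOn_Ioi_deriv_of_nonneg hcont.continuousWithinAt hderiv hnonneg hlim, ?_⟩
  rw [integral_Ioi_of_hasDerivAt_of_nonneg hcont.continuousWithinAt hderiv hnonneg hlim]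
  simp only [hG, zero_div, Real.arctan_zero]
  field_simp
  ring

lemma integral_div_sq_add_sq_mul_of_ne {k a : ℝ} (hk : 0 < k) (ha : 0 ≤ a) (hka : k ≠ a) :
    IntegrableOn (fun u : ℝ => u / (u ^ 2 + k ^ 2) * (u / (u ^ 2 + a ^ 2))) (Ioi 0) ∧
      ∫ u in Ioi (0 : ℝ), u / (u ^ 2 + k ^ 2) * (u / (u ^ 2 + a ^ 2)) = π / 2 / (k + a) := by
  have hsum : k + a ≠ 0 := by positivity
  have hsub : k - a ≠ 0 := sub_ne_zero.2 hka
  have hsq : k ^ 2 - a ^ 2 ≠ 0 := by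
    rw [sq_sub_sq]
    exact mul_ne_zero hsum hsub
  set G : ℝ → ℝ := fun u =>
    (k * Real.arctan (u / k) - a * Real.arctan (u / a)) / (k ^ 2 - a ^ 2) with hG
  have hnonneg : ∀ u ∈ Ioi (0 : ℝ), 0 ≤ u / (u ^ 2 + k ^ 2) * (u / (u ^ 2 + a ^ 2)) := by
    intro u (hu : 0 < u)
    positivity
  have hderiv : ∀ u ∈ Ioi (0 : ℝ),
      HasDerivAt G (u / (u ^ 2 + k ^ 2) * (u / (u ^ 2 + a ^ 2))) u := by
    intro u (hu : 0 < u)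
    refine (((hasDerivAt_mul_arctan_div k hu).sub
      (hasDerivAt_mul_arctan_div a hu)).div_const _).congr_deriv ?_
    have hk' : k ^ 2 + u ^ 2 ≠ 0 := by positivity
    have ha' : a ^ 2 + u ^ 2 ≠ 0 := by positivity
    rw [add_comm (u ^ 2), add_comm (u ^ 2)]
    field_simp
    ring
  have hcont : Continuous G := by fun_prop
  have hlim : Tendsto G atTop (𝓝 ((k * (π / 2) - a * (π / 2)) / (k ^ 2 - a ^ 2))) :=
    ((tendsto_mul_arctan_div_atTop hk.le).sub (tendsto_mul_arctan_div_atTop ha)).div_const _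
  refine ⟨integrableOn_Ioi_deriv_of_nonneg hcont.continuousWithinAt hderiv hnonneg hlim, ?_⟩
  rw [integral_Ioi_of_hasDerivAt_of_nonneg hcont.continuousWithinAt hderiv hnonneg hlim]
  simp only [hG, zero_div, Real.arctan_zero, mul_zero, sub_zero]
  field_simp
  ring

lemma integral_div_sq_add_sq_mul {k a : ℝ} (hk : 0 < k) (ha : 0 ≤ a) :
    IntegrableOn (fun u : ℝ => u / (u ^ 2 + k ^ 2) * (u / (u ^ 2 + a ^ 2))) (Ioi 0) ∧
      ∫ u in Ioi (0 : ℝ), u / (u ^ 2 + k ^ 2) * (u / (u ^ 2 + a ^ 2)) = π / 2 / (k + a) := by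
  rcases eq_or_ne k a with rfl | hka
  · exact integral_div_sq_add_sq_mul_self hk
  · exact integral_div_sq_add_sq_mul_of_ne hk ha hka

lemma hasSum_two_div_sub_two_div {a : ℝ} (ha : 0 ≤ a) :
    HasSum (fun j : ℕ => 2 / (2 * (j : ℝ) + 1 + a) - 2 / (2 * (j : ℝ) + 1 + (a + 2)))
      (2 / (1 + a)) := by
  have hpartial : ∀ n : ℕ,
      ∑ j ∈ Finset.range n, (2 / (2 * (j : ℝ) + 1 + a) - 2 / (2 * (j : ℝ) + 1 + (a + 2))) =
        2 / (1 + a) - 2 / (2 * (n : ℝ) + 1 + a) := by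
    intro n
    convert Finset.sum_range_sub' (fun j : ℕ => 2 / (2 * (j : ℝ) + 1 + a)) n using 2 with j
    · push_cast
      ring
    · simp
  have hlim : Tendsto (fun n : ℕ => 2 / (2 * (n : ℝ) + 1 + a)) atTop (𝓝 0) :=
    (tendsto_atTop_add_const_right _ _ (tendsto_atTop_add_const_right _ _
      (tendsto_natCast_atTop_atTop.const_mul_atTop two_pos))).const_div_atTop 2
  rw [hasSum_iff_tendsto_nat_of_nonneg]
  · simp_rw [hpartial]
    simpa only [sub_zero] using hlim.const_sub (2 / (1 + a))
  · intro j
    rw [sub_nonneg]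
    gcongr
    linarith

lemma tanh_half_mul_one_add_exp_neg (x : ℝ) :
    Real.tanh (x / 2) * (1 + Real.exp (-x)) = 1 - Real.exp (-x) := by
  have hsq : Real.exp (-x) = Real.exp (-(x / 2)) * Real.exp (-(x / 2)) := by
    rw [← Real.exp_add]
    ring_nf
  have hinv : Real.exp (x / 2) * Real.exp (-(x / 2)) = 1 := by
    rw [← Real.exp_add, add_neg_cancel, Real.exp_zero]
  rw [Real.tanh_eq, hsq, div_mul_eq_mul_div, div_eq_iff (by positivity)]
  linear_combination 2 * Real.exp (-(x / 2)) * hinv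

lemma integral_tanh_mul_sub {a : ℝ} (ha : 0 ≤ a) :
    ∫ u in Ioi (0 : ℝ), Real.tanh (π * u / 2) *
      (u / (u ^ 2 + a ^ 2) - u / (u ^ 2 + (a + 2) ^ 2)) = 2 / (1 + a) := by
  set K : ℕ → ℝ → ℝ := fun j u => 4 / π * (u / (u ^ 2 + (2 * (j : ℝ) + 1) ^ 2) *
    (u / (u ^ 2 + a ^ 2)) - u / (u ^ 2 + (2 * (j : ℝ) + 1) ^ 2) *
    (u / (u ^ 2 + (a + 2) ^ 2))) with hK
  have hodd : ∀ j : ℕ, 0 < 2 * (j : ℝ) + 1 := fun j => by positivity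
  have ha' : 0 ≤ a + 2 := by positivity
  have hKint : ∀ j, IntegrableOn (K j) (Ioi 0) := fun j =>
    ((integral_div_sq_add_sq_mul (hodd j) ha).1.sub
      (integral_div_sq_add_sq_mul (hodd j) ha').1).const_mul _
  have hKval : ∀ j, ∫ u in Ioi (0 : ℝ), K j u =
      2 / (2 * (j : ℝ) + 1 + a) - 2 / (2 * (j : ℝ) + 1 + (a + 2)) := by
    intro j
    simp only [hK]
    obtain ⟨hint₁, hval₁⟩ := integral_div_sq_add_sq_mul (hodd j) ha
    obtain ⟨hint₂, hval₂⟩ := integral_div_sq_add_sq_mul (hodd j) ha'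
    rw [integral_const_mul, integral_sub hint₁ hint₂, hval₁, hval₂]
    have : 2 * (j : ℝ) + 1 + a ≠ 0 := by positivity
    have : 2 * (j : ℝ) + 1 + (a + 2) ≠ 0 := by positivity
    field_simp
    ring
  have hKnonneg : ∀ j, ∀ u ∈ Ioi (0 : ℝ), 0 ≤ K j u := by
    intro j u (hu : 0 < u)
    have hanti : u / (u ^ 2 + (a + 2) ^ 2) ≤ u / (u ^ 2 + a ^ 2) := by
      gcongr
      linarith
    simp only [hK, ← mul_sub]
    exact mul_nonneg (by positivity) (mul_nonneg (by positivity) (sub_nonneg.2 hanti))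
  have hsum := hasSum_integral_of_summable_integral_norm hKint (by
    have hnorm : ∀ j, ∫ u in Ioi (0 : ℝ), ‖K j u‖ = ∫ u in Ioi (0 : ℝ), K j u := fun j =>
      setIntegral_congr_fun measurableSet_Ioi fun u hu => Real.norm_of_nonneg (hKnonneg j u hu)
    simp_rw [hnorm, hKval]
    exact (hasSum_two_div_sub_two_div ha).summable)
  simp_rw [hKval] at hsum
  rw [(hasSum_two_div_sub_two_div ha).unique hsum]
  refine setIntegral_congr_fun measurableSet_Ioi fun u hu => ?_
  simp only [← ((hasSum_tanh u hu).mul_right _).tsum_eq, hK]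
  exact tsum_congr fun j => by ring

lemma integrableOn_mul_exp_neg_mul {u : ℝ} (hu : 0 < u) {g : ℝ → ℝ} (hg : Continuous g)
    (hbound : ∀ t, |g t| ≤ 1) : IntegrableOn (fun t => g t * Real.exp (-(u * t))) (Ioi 0) := by
  refine Integrable.mono' (exp_neg_integrableOn_Ioi 0 hu) (by fun_prop)
    (Eventually.of_forall fun t => ?_)
  rw [norm_mul, Real.norm_of_nonneg (Real.exp_pos _).le, Real.norm_eq_abs, neg_mul]
  exact mul_le_of_le_one_left (Real.exp_pos _).le (hbound t)

lemma integral_sin_mul_exp_neg_mul (u : ℝ) :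
    ∫ t in (0 : ℝ)..π, Real.sin t * Real.exp (-(u * t)) =
      (1 + Real.exp (-(π * u))) / (1 + u ^ 2) := by
  have hderiv : ∀ t ∈ uIcc 0 π, HasDerivAt
      (fun t => -(Real.exp (-(u * t)) * (u * Real.sin t + Real.cos t)) / (1 + u ^ 2))
      (Real.sin t * Real.exp (-(u * t))) t := by
    intro t _
    have hexp : HasDerivAt (fun t : ℝ => Real.exp (-(u * t)))
        (Real.exp (-(u * t)) * (-(u * 1))) t :=
      (((hasDerivAt_id t).const_mul u).neg).exp
    have htrig := ((Real.hasDerivAt_sin t).const_mul u).add (Real.hasDerivAt_cos t)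
    refine ((hexp.mul htrig).neg.div_const (1 + u ^ 2)).congr_deriv ?_
    have : 1 + u ^ 2 ≠ 0 := by positivity
    simp only [Pi.add_apply]
    field_simp
    ring
  rw [intervalIntegral.integral_eq_sub_of_hasDerivAt hderiv
    (Continuous.intervalIntegrable (by fun_prop) _ _)]
  simp only [Real.sin_pi, Real.cos_pi, Real.sin_zero, Real.cos_zero, mul_zero, neg_zero,
    Real.exp_zero]
  ring_nf

lemma one_sub_mul_integral_Ioi_of_add_eq_mul {g : ℝ → ℝ} {T q : ℝ} (hT : 0 ≤ T)
    (hg : IntegrableOn g (Ioi 0)) (hshift : ∀ t, g (t + T) = q * g t) :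
    (1 - q) * ∫ t in Ioi (0 : ℝ), g t = ∫ t in (0 : ℝ)..T, g t := by
  have htail : ∫ t in Ioi T, g t = q * ∫ t in Ioi (0 : ℝ), g t := by
    have h := (measurePreserving_add_right (volume : Measure ℝ) T).setIntegral_preimage_emb
      (measurableEmbedding_addRight T) g (Ioi T)
    rw [← h, preimage_add_const_Ioi, sub_self]
    simp_rw [hshift, integral_const_mul]
  have hsplit := intervalIntegral.integral_interval_add_Ioi hg (hg.mono_set (Ioi_subset_Ioi hT))
  linear_combination -hsplit + htail

lemma tanh_mul_integral_abs_sin_mul_exp_neg_mul {u : ℝ} (hu : 0 < u) :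
    Real.tanh (π * u / 2) * ∫ t in Ioi (0 : ℝ), |Real.sin t| * Real.exp (-(u * t)) =
      (1 + u ^ 2)⁻¹ := by
  have hperiod : (1 - Real.exp (-(π * u))) *
      ∫ t in Ioi (0 : ℝ), |Real.sin t| * Real.exp (-(u * t)) =
        (1 + Real.exp (-(π * u))) / (1 + u ^ 2) := by
    rw [one_sub_mul_integral_Ioi_of_add_eq_mul Real.pi_pos.le
      (integrableOn_mul_exp_neg_mul hu (by fun_prop) fun t => ?_) fun t => ?_,
      ← integral_sin_mul_exp_neg_mul]
    · refine intervalIntegral.integral_congr fun t ht => ?_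
      rw [uIcc_of_le Real.pi_pos.le] at ht
      simp only [abs_of_nonneg (Real.sin_nonneg_of_mem_Icc ht)]
    · rw [abs_abs]
      exact Real.abs_sin_le_one t
    · rw [Real.sin_add_pi, abs_neg, mul_left_comm, ← Real.exp_add]
      ring_nf
  have hne : 1 + Real.exp (-(π * u)) ≠ 0 := by positivity
  rw [← tanh_half_mul_one_add_exp_neg, mul_right_comm] at hperiod
  refine mul_right_cancel₀ hne (hperiod.trans ?_)
  ring

lemma integral_cos_mul_exp_neg_mul {u : ℝ} (hu : 0 < u) (a : ℝ) :
    ∫ t in Ioi (0 : ℝ), Real.cos (a * t) * Real.exp (-(u * t)) = u / (u ^ 2 + a ^ 2) := by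
  have hre : ((-u : ℂ) + a * Complex.I).re < 0 := by simpa using hu
  have hcongr : ∀ t : ℝ, Real.cos (a * t) * Real.exp (-(u * t)) =
      RCLike.re (Complex.exp (((-u : ℂ) + a * Complex.I) * t)) := by
    intro t
    simp [Complex.exp_re, mul_comm]
  simp_rw [hcongr]
  rw [integral_re (integrableOn_exp_mul_complex_Ioi hre 0), integral_exp_mul_complex_Ioi hre 0]
  simp [Complex.div_re, Complex.normSq_apply, ← sq]

lemma integral_sin_mul_exp_neg_mul_mul_sin {u : ℝ} (hu : 0 < u) (s : ℝ) :
    ∫ t in Ioi (0 : ℝ), Real.sin t * Real.exp (-(u * t)) * Real.sin (s * t) =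
      1 / 2 * (u / (u ^ 2 + (s - 1) ^ 2) - u / (u ^ 2 + (s - 1 + 2) ^ 2)) := by
  have hcos : ∀ a : ℝ, IntegrableOn (fun t => Real.cos (a * t) * Real.exp (-(u * t))) (Ioi 0) :=
    fun a => integrableOn_mul_exp_neg_mul hu (by fun_prop) fun t => Real.abs_cos_le_one _
  rw [← integral_cos_mul_exp_neg_mul hu, ← integral_cos_mul_exp_neg_mul hu,
    ← integral_sub (hcos _) (hcos _), ← integral_const_mul]
  refine integral_congr_ae (Eventually.of_forall fun t => ?_)
  have hsub : (s - 1) * t = s * t - t := by ring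
  have hadd : (s - 1 + 2) * t = s * t + t := by ring
  simp only [hsub, hadd, Real.cos_sub, Real.cos_add]
  ring

/-- Lebesgue measure on the open quarter plane `(0, ∞) × (0, ∞)`. -/
noncomputable def quarterPlane : Measure (ℝ × ℝ) :=
  (volume.restrict (Ioi 0)).prod (volume.restrict (Ioi 0))

lemma integral_quarterPlane {f : ℝ × ℝ → ℝ} (hf : Integrable f quarterPlane) :
    ∫ p, f p ∂quarterPlane = ∫ u in Ioi (0 : ℝ), ∫ t in Ioi (0 : ℝ), f (u, t) :=
  integral_prod f hf

/-- The kernel `F (u, t) = tanh (π u / 2) sin t e^{-u t}` on the quarter plane. Integrating out `u`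
gives the function of smallest `L¹`-norm whose sine transform at `s` is `1 / s` for `|s| ≥ 1`
(Sz.-Nagy). Keeping `u` as an integration variable avoids any discussion of the sign changes of
that function. -/
noncomputable def sineKernel (p : ℝ × ℝ) : ℝ :=
  Real.tanh (π * p.1 / 2) * (Real.sin p.2 * Real.exp (-(p.1 * p.2)))

lemma continuous_sineKernel : Continuous sineKernel := by
  have htanh : Continuous Real.tanh := by
    simp only [funext Real.tanh_eq_sinh_div_cosh]
    exact Real.continuous_sinh.div Real.continuous_cosh fun x => (Real.cosh_pos x).ne'
  unfold sineKernel
  fun_prop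

lemma integral_norm_sineKernel_right {u : ℝ} (hu : 0 < u) :
    ∫ t in Ioi (0 : ℝ), ‖sineKernel (u, t)‖ = (1 + u ^ 2)⁻¹ := by
  have htanh : 0 ≤ Real.tanh (π * u / 2) := by
    rw [Real.tanh_eq_sinh_div_cosh]
    exact div_nonneg (Real.sinh_nonneg_iff.2 (by positivity)) (Real.cosh_pos _).le
  rw [← tanh_mul_integral_abs_sin_mul_exp_neg_mul hu, ← integral_const_mul]
  refine integral_congr_ae (Eventually.of_forall fun t => ?_)
  simp only [sineKernel, norm_mul, Real.norm_of_nonneg htanh, Real.norm_eq_abs, Real.abs_exp]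

lemma integrable_sineKernel : Integrable sineKernel quarterPlane := by
  rw [quarterPlane, integrable_prod_iff continuous_sineKernel.aestronglyMeasurable]
  constructor
  · filter_upwards [ae_restrict_mem measurableSet_Ioi] with u hu
    exact (integrableOn_mul_exp_neg_mul hu Real.continuous_sin Real.abs_sin_le_one).const_mul
      (Real.tanh (π * u / 2))
  · refine Integrable.congr (integrable_inv_one_add_sq.integrableOn (s := Ioi 0)) ?_
    filter_upwards [ae_restrict_mem measurableSet_Ioi] with u hu
    exact (integral_norm_sineKernel_right hu).symm

lemma integral_norm_sineKernel : ∫ p, ‖sineKernel p‖ ∂quarterPlane = π / 2 := by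
  rw [integral_quarterPlane integrable_sineKernel.norm, setIntegral_congr_fun measurableSet_Ioi
    fun u hu => integral_norm_sineKernel_right hu, integral_Ioi_inv_one_add_sq]
  simp

lemma integrable_sineKernel_mul_sin (s : ℝ) :
    Integrable (fun p => sineKernel p * Real.sin (s * p.2)) quarterPlane :=
  integrable_sineKernel.mul_bdd (c := 1) (by fun_prop)
    (Eventually.of_forall fun p => Real.abs_sin_le_one _)

lemma integral_sineKernel_mul_sin_of_one_le {s : ℝ} (hs : 1 ≤ s) :
    ∫ p, sineKernel p * Real.sin (s * p.2) ∂quarterPlane = 1 / s := by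
  have hinner : ∀ u ∈ Ioi (0 : ℝ), ∫ t in Ioi (0 : ℝ), sineKernel (u, t) * Real.sin (s * t) =
      1 / 2 * (Real.tanh (π * u / 2) *
        (u / (u ^ 2 + (s - 1) ^ 2) - u / (u ^ 2 + (s - 1 + 2) ^ 2))) := by
    intro u hu
    rw [mul_left_comm, ← integral_sin_mul_exp_neg_mul_mul_sin hu, ← integral_const_mul]
    simp only [sineKernel, mul_assoc]
  rw [integral_quarterPlane (integrable_sineKernel_mul_sin s),
    setIntegral_congr_fun measurableSet_Ioi hinner, integral_const_mul,
    integral_tanh_mul_sub (by linarith)]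
  ring

theorem integral_sineKernel_mul_sin {s : ℝ} (hs : 1 ≤ |s|) :
    ∫ p, sineKernel p * Real.sin (s * p.2) ∂quarterPlane = 1 / s := by
  rcases le_abs.1 hs with h | h
  · exact integral_sineKernel_mul_sin_of_one_le h
  · have hneg := integral_sineKernel_mul_sin_of_one_le h
    simp only [neg_mul, Real.sin_neg, mul_neg, integral_neg, one_div, inv_neg, neg_inj] at hneg
    rw [hneg, one_div]

end ExtremalKernel

section SpectralProjection

open Set

variable {H : Type*} [NormedAddCommGroup H] [InnerProductSpace ℂ H]
  {B : H →L[ℂ] H} {s t : Set ℝ} {d : ℝ}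

/-- The set `s` cuts the spectrum of `B` into two separated parts, i.e. `s` is relatively clopen in
the spectrum. Exactly for such sets `spectralProj B s` is the spectral projection rather than the
junk value `0` of the functional calculus. -/
def SplitsSpectrum (B : H →L[ℂ] H) (s : Set ℝ) : Prop :=
  ContinuousOn (s.indicator fun _ => (1 : ℝ)) (spectrum ℝ B)

/-- The parts of the spectrum of `B` inside and outside `s` are at distance at least `d`. -/
def HasSpectralGap (B : H →L[ℂ] H) (s : Set ℝ) (d : ℝ) : Prop :=
  ∀ x ∈ spectrum ℝ B ∩ s, ∀ y ∈ spectrum ℝ B \ s, d ≤ |x - y|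

lemma HasSpectralGap.splitsSpectrum (hgap : HasSpectralGap B s d) (hd : 0 < d) :
    SplitsSpectrum B s := by
  refine Metric.continuousOn_iff.2 fun y hy ε hε => ⟨d, hd, fun x hx hxy => ?_⟩
  rw [Real.dist_eq] at hxy
  by_cases hxs : x ∈ s <;> by_cases hys : y ∈ s
  · simpa [hxs, hys] using hε
  · exact absurd (hgap x ⟨hx, hxs⟩ y ⟨hy, hys⟩) hxy.not_ge
  · exact absurd (hgap y ⟨hy, hys⟩ x ⟨hx, hxs⟩) (abs_sub_comm x y ▸ hxy).not_ge
  · simpa [hxs, hys] using hε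

lemma SplitsSpectrum.compl (hs : SplitsSpectrum B s) : SplitsSpectrum B sᶜ := by
  rw [SplitsSpectrum, indicator_compl]
  exact continuousOn_const.sub hs

lemma SplitsSpectrum.inter (hs : SplitsSpectrum B s) (ht : SplitsSpectrum B t) :
    SplitsSpectrum B (s ∩ t) := by
  have hmul : (s ∩ t).indicator (1 : ℝ → ℝ) = s.indicator 1 * t.indicator 1 :=
    inter_indicator_one
  exact (hmul ▸ hs.mul ht : ContinuousOn ((s ∩ t).indicator (1 : ℝ → ℝ)) _)

variable [CompleteSpace H]

lemma SplitsSpectrum.isCompact (hs : SplitsSpectrum B s) : IsCompact (spectrum ℝ B ∩ s) := by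
  have hpre : spectrum ℝ B ∩ s = spectrum ℝ B ∩ s.indicator (fun _ => (1 : ℝ)) ⁻¹' {1} := by
    ext x
    by_cases hx : x ∈ s <;> simp [hx]
  rw [hpre]
  exact (spectrum.isCompact B).of_isClosed_subset
    (hs.preimage_isClosed_of_isClosed (spectrum.isClosed B) isClosed_singleton) inter_subset_left

lemma spectralProj_congr (h : spectrum ℝ B ∩ s = spectrum ℝ B ∩ t) :
    spectralProj B s = spectralProj B t := by
  refine cfc_congr fun x hx => ?_
  have hiff : x ∈ s ↔ x ∈ t := by simpa [hx] using congrArg (x ∈ ·) h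
  by_cases hxs : x ∈ s
  · simp [hxs, hiff.1 hxs]
  · simp [hxs, mt hiff.2 hxs]

lemma isSelfAdjoint_spectralProj (B : H →L[ℂ] H) (s : Set ℝ) :
    IsSelfAdjoint (spectralProj B s) :=
  cfc_predicate _ _

lemma spectralProj_mul_spectralProj (hs : SplitsSpectrum B s) (ht : SplitsSpectrum B t) :
    spectralProj B s * spectralProj B t = spectralProj B (s ∩ t) := by
  rw [spectralProj, spectralProj, ← cfc_mul _ _ B hs ht, spectralProj]
  congr 1
  exact (inter_indicator_one (M₀ := ℝ)).symm

lemma spectralProj_compl (hB : IsSelfAdjoint B) (hs : SplitsSpectrum B s) :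
    spectralProj B sᶜ = 1 - spectralProj B s := by
  rw [spectralProj, indicator_compl, ← cfc_one ℝ B]
  exact cfc_sub _ _ B continuousOn_const hs

lemma isStarProjection_spectralProj (hs : SplitsSpectrum B s) :
    IsStarProjection (spectralProj B s) :=
  ⟨by rw [IsIdempotentElem, spectralProj_mul_spectralProj hs hs, inter_self],
    isSelfAdjoint_spectralProj B s⟩

end SpectralProjection

section Sylvester

open MeasureTheory Set Filter
open scoped Real Topology

lemma exists_tagged_partitionOfUnity {S : Set ℝ} (hS : IsCompact S) {ε : ℝ} (hε : 0 < ε) :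
    ∃ (ι : Type) (_ : Fintype ι) (f : PartitionOfUnity ι ℝ S) (l : ι → ℝ),
      (∀ i, l i ∈ S) ∧ ∀ i x, f i x ≠ 0 → |l i - x| ≤ ε := by
  obtain ⟨t, htS, htf, hcov⟩ := hS.finite_cover_balls hε
  have : Fintype t := htf.fintype
  have hcover : S ⊆ ⋃ i : t, Metric.ball (i : ℝ) ε := by
    rwa [← biUnion_eq_iUnion t fun x _ => Metric.ball x ε]
  obtain ⟨f, hf⟩ := PartitionOfUnity.exists_isSubordinate hS.isClosed
    (fun i : t => Metric.ball (i : ℝ) ε) (fun i => Metric.isOpen_ball) hcover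
  refine ⟨t, inferInstance, f, fun i => i, fun i => htS i.2, fun i x hx => ?_⟩
  have hball : x ∈ Metric.ball (i : ℝ) ε := hf i (subset_tsupport _ hx)
  rw [← Real.dist_eq, dist_comm]
  exact (Metric.mem_ball.1 hball).le

lemma sum_sum_smul_mul_mul_eq_sub {K R ι κ : Type*} [CommRing K] [Ring R] [Algebra K R]
    [Fintype ι] [Fintype κ] (l p : ι → K) (m q : κ → K) (a : ι → R) (b : κ → R) (X : R) :
    ∑ i, ∑ j, (p i * q j * (l i - m j)) • (a i * X * b j) =
      (∑ i, (p i * l i) • a i) * X * (∑ j, q j • b j) -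
        (∑ i, p i • a i) * X * ∑ j, (q j * m j) • b j := by
  simp only [Finset.sum_mul, Finset.mul_sum, smul_mul_assoc, mul_smul_comm, Finset.smul_sum,
    smul_smul]
  rw [Finset.sum_comm (s := Finset.univ (α := κ)), Finset.sum_comm (s := Finset.univ (α := κ)),
    ← Finset.sum_sub_distrib]
  refine Finset.sum_congr rfl fun i _ => ?_
  rw [← Finset.sum_sub_distrib]
  refine Finset.sum_congr rfl fun j _ => ?_
  rw [← sub_smul]
  congr 1
  ring

variable {H : Type*} [NormedAddCommGroup H] [InnerProductSpace ℂ H] [CompleteSpace H]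
  {B C : H →L[ℂ] H} {s t : Set ℝ} {δ ε : ℝ}

lemma norm_sum_smul_cfc_le (hB : IsSelfAdjoint B) {ι : Type*} [Fintype ι] {k : ι → ℝ → ℝ}
    (hk : ∀ i, ContinuousOn (k i) (spectrum ℝ B)) {r : ℝ} (hr : 0 ≤ r)
    (hkr : ∀ x ∈ spectrum ℝ B, ∑ i, |k i x| ≤ r) {p : ι → ℂ} (hp : ∀ i, ‖p i‖ ≤ 1) :
    ‖∑ i, p i • cfc (k i) B‖ ≤ r := by
  have hre : MapsTo Complex.re (spectrum ℂ B) (spectrum ℝ B) := fun z hz => by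
    rw [← hB.spectrumRestricts.image]
    exact mem_image_of_mem _ hz
  have hcont : ∀ i, ContinuousOn (fun z : ℂ => (k i z.re : ℂ)) (spectrum ℂ B) := fun i =>
    Complex.continuous_ofReal.comp_continuousOn
      ((hk i).comp Complex.continuous_re.continuousOn hre)
  have hsum : ∑ i, p i • cfc (k i) B = cfc (∑ i, fun z : ℂ => p i * k i z.re) B := by
    rw [cfc_sum_univ (fun i (z : ℂ) => p i * k i z.re) B fun i =>
      continuousOn_const.mul (hcont i)]
    refine Finset.sum_congr rfl fun i _ => ?_
    rw [cfc_real_eq_complex (k i) hB, cfc_const_mul (p i) _ B (hcont i)]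
  rw [hsum]
  refine norm_cfc_le hr fun z hz => ?_
  rw [Finset.sum_apply]
  refine (norm_sum_le _ _).trans ((Finset.sum_le_sum fun i _ => ?_).trans (hkr z.re (hre hz)))
  rw [norm_mul, Complex.norm_real, Real.norm_eq_abs]
  exact mul_le_of_le_one_left (abs_nonneg _) (hp i)

/-- The operators `a i`, with tags `l i`, form a smooth substitute for a partition of the range of
the projection `E` into spectral subspaces of `B` of diameter at most `ε`: they sum to `E`, and with
respect to linear combinations with coefficients in the unit disc they behave like mutually
orthogonal projections on which `B` is the scalar `l i` up to an error `ε`. -/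
structure IsApproxResolution (B E : H →L[ℂ] H) (ε : ℝ) {ι : Type*} [Fintype ι] (l : ι → ℝ)
    (a : ι → H →L[ℂ] H) : Prop where
  sum_eq : ∑ i, a i = E
  commute : ∀ i, Commute (a i) B
  norm_sum_le : ∀ p : ι → ℂ, (∀ i, ‖p i‖ ≤ 1) → ‖∑ i, p i • a i‖ ≤ 1
  norm_sum_sub_le : ∀ p : ι → ℂ, (∀ i, ‖p i‖ ≤ 1) →
    ‖∑ i, (p i * l i) • a i - (∑ i, p i • a i) * B‖ ≤ ε

lemma SplitsSpectrum.exists_tagged_partition (hs : SplitsSpectrum B s) (hε : 0 < ε) :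
    ∃ (ι : Type) (_ : Fintype ι) (l : ι → ℝ) (k : ι → ℝ → ℝ),
      (∀ i, l i ∈ spectrum ℝ B ∩ s) ∧ (∀ i, ContinuousOn (k i) (spectrum ℝ B)) ∧
      (∀ i x, 0 ≤ k i x) ∧
      (∀ x ∈ spectrum ℝ B, ∑ i, k i x = s.indicator (fun _ => (1 : ℝ)) x) ∧
      ∀ i x, |l i * k i x - k i x * x| ≤ k i x * ε := by
  obtain ⟨ι, _, f, l, hl, hmesh⟩ := exists_tagged_partitionOfUnity hs.isCompact hε
  have hnonneg : ∀ i x, 0 ≤ s.indicator (fun _ => (1 : ℝ)) x * f i x := fun i x =>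
    mul_nonneg (indicator_nonneg (fun _ _ => zero_le_one) x) (f.nonneg i x)
  refine ⟨ι, inferInstance, l, fun i x => s.indicator (fun _ => (1 : ℝ)) x * f i x, hl,
    fun i => hs.mul (f i).continuous.continuousOn, hnonneg, fun x hx => ?_, fun i x => ?_⟩
  · rw [← Finset.mul_sum]
    by_cases hxs : x ∈ s
    · rw [← finsum_eq_sum_of_fintype, f.sum_eq_one ⟨hx, hxs⟩, mul_one]
    · rw [indicator_of_notMem hxs, zero_mul]
  · rw [mul_comm (l i), ← mul_sub, abs_mul, abs_of_nonneg (hnonneg i x)]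
    by_cases hf : f i x = 0
    · simp [hf]
    · exact mul_le_mul_of_nonneg_left (hmesh i x hf) (hnonneg i x)

lemma exists_isApproxResolution (hB : IsSelfAdjoint B) (hs : SplitsSpectrum B s) (hε : 0 < ε) :
    ∃ (ι : Type) (_ : Fintype ι) (l : ι → ℝ) (a : ι → H →L[ℂ] H),
      (∀ i, l i ∈ spectrum ℝ B ∩ s) ∧ IsApproxResolution B (spectralProj B s) ε l a := by
  obtain ⟨ι, _, l, k, hl, hcont, hnonneg, hsum, hmesh⟩ := hs.exists_tagged_partition hε
  have hsum_le : ∀ x ∈ spectrum ℝ B, ∑ i, k i x ≤ 1 := fun x hx =>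
    (hsum x hx).trans_le (indicator_le_self' (fun _ _ => zero_le_one) x)
  refine ⟨ι, inferInstance, l, fun i => cfc (k i) B, hl, ?_, fun i => ?_, fun p hp => ?_,
    fun p hp => ?_⟩
  · rw [← cfc_sum_univ k B hcont]
    refine cfc_congr fun x hx => ?_
    rw [Finset.sum_apply, hsum x hx]
  · have h := cfc_commute_cfc (k i) id B
    rwa [cfc_id ℝ B] at h
  · refine norm_sum_smul_cfc_le hB hcont zero_le_one (fun x hx => ?_) hp
    simpa only [abs_of_nonneg (hnonneg _ _)] using hsum_le x hx
  · have herror : ∀ i, cfc (fun x => l i * k i x - k i x * x) B =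
        (l i : ℂ) • cfc (k i) B - cfc (k i) B * B := by
      intro i
      have := hcont i
      rw [cfc_sub (fun x => l i * k i x) (fun x => k i x * x) B (by fun_prop) (by fun_prop),
        cfc_const_mul (l i) (k i) B, cfc_mul (k i) (fun x => x) B, cfc_id' ℝ B]
      rfl
    have heq : ∑ i, (p i * l i) • cfc (k i) B - (∑ i, p i • cfc (k i) B) * B =
        ∑ i, p i • cfc (fun x => l i * k i x - k i x * x) B := by
      rw [Finset.sum_mul, ← Finset.sum_sub_distrib]
      simp only [herror, smul_sub, smul_smul, smul_mul_assoc]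
    rw [heq]
    refine norm_sum_smul_cfc_le hB (fun i => ?_) hε.le (fun x hx => ?_) hp
    · have := hcont i
      fun_prop
    · refine (Finset.sum_le_sum fun i _ => hmesh i x).trans ?_
      rw [← Finset.sum_mul]
      exact mul_le_of_le_one_left hε.le (hsum_le x hx)

section

variable {E F : H →L[ℂ] H} {ι κ : Type*} [Fintype ι] [Fintype κ] {l : ι → ℝ} {m : κ → ℝ}
  {a : ι → H →L[ℂ] H} {b : κ → H →L[ℂ] H}

lemma IsApproxResolution.norm_sum_sum_smul_le (ha : IsApproxResolution B E ε l a)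
    (hb : IsApproxResolution C F ε m b) (X : H →L[ℂ] H) {p : ι → ℂ} {q : κ → ℂ}
    (hp : ∀ i, ‖p i‖ ≤ 1) (hq : ∀ j, ‖q j‖ ≤ 1) :
    ‖∑ i, ∑ j, (p i * q j * (l i - m j : ℝ)) • (a i * X * b j)‖ ≤
      ‖B * X - X * C‖ + 2 * ε * ‖X‖ := by
  set U := ∑ i, p i • a i
  set W := ∑ j, q j • b j
  set R := ∑ i, (p i * l i) • a i - U * B with hR
  set S := ∑ j, (q j * m j) • b j - W * C with hS
  have hnU : ‖U‖ ≤ 1 := ha.norm_sum_le p hp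
  have hnW : ‖W‖ ≤ 1 := hb.norm_sum_le q hq
  have hnR : ‖R‖ ≤ ε := ha.norm_sum_sub_le p hp
  have hnS : ‖S‖ ≤ ε := hb.norm_sum_sub_le q hq
  have hcomm : W * C = C * W :=
    (Commute.sum_left _ _ _ fun j _ => (hb.commute j).smul_left (q j)).eq
  have hsplit : ∑ i, ∑ j, (p i * q j * (l i - m j : ℝ)) • (a i * X * b j) =
      U * (B * X - X * C) * W + R * X * W - U * X * S := by
    simp only [Complex.ofReal_sub]
    rw [sum_sum_smul_mul_mul_eq_sub, hR, hS, hcomm]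
    noncomm_ring
  have hmul : ∀ {x y z : H →L[ℂ] H} {α β γ : ℝ}, ‖x‖ ≤ α → ‖y‖ ≤ β → ‖z‖ ≤ γ →
      ‖x * y * z‖ ≤ α * β * γ := fun hx hy hz => norm_mul₃_le.trans <| by
    have := (norm_nonneg _).trans hx
    have := (norm_nonneg _).trans hy
    gcongr
  rw [hsplit]
  calc ‖U * (B * X - X * C) * W + R * X * W - U * X * S‖
      ≤ ‖U * (B * X - X * C) * W‖ + ‖R * X * W‖ + ‖U * X * S‖ :=
        (norm_sub_le _ _).trans (by gcongr; exact norm_add_le _ _)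
    _ ≤ 1 * ‖B * X - X * C‖ * 1 + ε * ‖X‖ * 1 + 1 * ‖X‖ * ε := by
        gcongr
        exacts [hmul hnU le_rfl hnW, hmul hnR le_rfl hnW, hmul hnU le_rfl hnS]
    _ = ‖B * X - X * C‖ + 2 * ε * ‖X‖ := by ring

-- The sine is a difference of two exponentials, each of which separates the variables `l i`, `m j`.
lemma IsApproxResolution.norm_sum_sum_sin_smul_le (ha : IsApproxResolution B E ε l a)
    (hb : IsApproxResolution C F ε m b) (X : H →L[ℂ] H) (τ : ℝ) :
    ‖∑ i, ∑ j, ((Real.sin (τ * (l i - m j)) * (l i - m j) : ℝ) : ℂ) • (a i * X * b j)‖ ≤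
      ‖B * X - X * C‖ + 2 * ε * ‖X‖ := by
  set M : ℝ → H →L[ℂ] H := fun τ => ∑ i, ∑ j, (Complex.exp ((τ * l i : ℝ) * Complex.I) *
    Complex.exp ((-(τ * m j) : ℝ) * Complex.I) * (l i - m j : ℝ)) • (a i * X * b j) with hM
  have hnM : ∀ τ, ‖M τ‖ ≤ ‖B * X - X * C‖ + 2 * ε * ‖X‖ := fun τ =>
    ha.norm_sum_sum_smul_le hb X (fun i => (Complex.norm_exp_ofReal_mul_I _).le)
      fun j => (Complex.norm_exp_ofReal_mul_I _).le
  have hsin : ∑ i, ∑ j, ((Real.sin (τ * (l i - m j)) * (l i - m j) : ℝ) : ℂ) • (a i * X * b j) =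
      (Complex.I / 2) • (M (-τ) - M τ) := by
    simp only [hM, ← Finset.sum_sub_distrib, Finset.smul_sum, ← sub_smul, smul_smul]
    refine Finset.sum_congr rfl fun i _ => Finset.sum_congr rfl fun j _ => ?_
    congr 1
    rw [← Complex.exp_add, ← Complex.exp_add, Complex.ofReal_mul, Complex.ofReal_sin, Complex.sin]
    push_cast
    ring_nf
  have hI : ‖Complex.I / 2‖ = 1 / 2 := by simp
  rw [hsin, norm_smul, hI]
  linarith [norm_sub_le (M (-τ)) (M τ), hnM τ, hnM (-τ)]

lemma IsApproxResolution.integral_sineKernel_smul (ha : IsApproxResolution B E ε l a)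
    (hb : IsApproxResolution C F ε m b) (X : H →L[ℂ] H) (hδ : 0 < δ)
    (hsep : ∀ i j, δ ≤ |l i - m j|) :
    ∫ p, (sineKernel p : ℂ) • ∑ i, ∑ j,
      ((Real.sin (p.2 / δ * (l i - m j)) * (l i - m j) : ℝ) : ℂ) • (a i * X * b j)
        ∂quarterPlane = (δ : ℂ) • (E * X * F) := by
  have hcoeff : ∀ i j (p : ℝ × ℝ), (sineKernel p : ℂ) *
      ((Real.sin (p.2 / δ * (l i - m j)) * (l i - m j) : ℝ) : ℂ) =
      ((sineKernel p * Real.sin ((l i - m j) / δ * p.2) * (l i - m j) : ℝ) : ℂ) := by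
    intro i j p
    rw [← Complex.ofReal_mul, ← mul_assoc, div_mul_comm]
  have hint : ∀ i j, Integrable (fun p : ℝ × ℝ => ((sineKernel p *
      Real.sin ((l i - m j) / δ * p.2) * (l i - m j) : ℝ) : ℂ) • (a i * X * b j))
      quarterPlane := fun i j =>
    (((integrable_sineKernel_mul_sin _).mul_const _).ofReal (𝕜 := ℂ)).smul_const _
  have hterm : ∀ i j, ∫ p, ((sineKernel p * Real.sin ((l i - m j) / δ * p.2) *
      (l i - m j) : ℝ) : ℂ) • (a i * X * b j) ∂quarterPlane = (δ : ℂ) • (a i * X * b j) := by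
    intro i j
    have hone : 1 ≤ |(l i - m j) / δ| := by
      rw [abs_div, abs_of_pos hδ, one_le_div hδ]
      exact hsep i j
    have hne : l i - m j ≠ 0 := abs_pos.1 (hδ.trans_le (hsep i j))
    rw [integral_smul_const, integral_complex_ofReal, integral_mul_const,
      integral_sineKernel_mul_sin hone, one_div_div, div_mul_cancel₀ _ hne]
  simp only [Finset.smul_sum, smul_smul, hcoeff]
  rw [integral_finsetSum _ fun i _ => integrable_finsetSum _ fun j _ => hint i j]
  simp_rw [integral_finsetSum _ fun j _ => hint _ j, hterm]
  simp_rw [← ha.sum_eq, ← hb.sum_eq, Finset.sum_mul, Finset.mul_sum, Finset.smul_sum]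

lemma IsApproxResolution.norm_mul_mul_le (ha : IsApproxResolution B E ε l a)
    (hb : IsApproxResolution C F ε m b) (X : H →L[ℂ] H) (hδ : 0 < δ)
    (hsep : ∀ i j, δ ≤ |l i - m j|) :
    δ * ‖E * X * F‖ ≤ π / 2 * (‖B * X - X * C‖ + 2 * ε * ‖X‖) := by
  have hnorm : δ * ‖E * X * F‖ = ‖(δ : ℂ) • (E * X * F)‖ := by
    rw [norm_smul, Complex.norm_real, Real.norm_of_nonneg hδ.le]
  rw [hnorm, ← ha.integral_sineKernel_smul hb X hδ hsep, ← integral_norm_sineKernel,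
    ← integral_mul_const]
  refine norm_integral_le_of_norm_le (integrable_sineKernel.norm.mul_const _)
    (Eventually.of_forall fun p => ?_)
  rw [norm_smul, Complex.norm_real]
  gcongr
  exact ha.norm_sum_sum_sin_smul_le hb X _

end

theorem norm_spectralProj_mul_mul_spectralProj_le (hB : IsSelfAdjoint B) (hC : IsSelfAdjoint C)
    (hs : SplitsSpectrum B s) (ht : SplitsSpectrum C t) (hδ : 0 < δ)
    (hsep : ∀ x ∈ spectrum ℝ B ∩ s, ∀ y ∈ spectrum ℝ C ∩ t, δ ≤ |x - y|) (X : H →L[ℂ] H) :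
    δ * ‖spectralProj B s * X * spectralProj C t‖ ≤ π / 2 * ‖B * X - X * C‖ := by
  have hbound : ∀ ε > 0, δ * ‖spectralProj B s * X * spectralProj C t‖ ≤
      π / 2 * (‖B * X - X * C‖ + 2 * ε * ‖X‖) := by
    intro ε hε
    obtain ⟨ι, _, l, a, hl, ha⟩ := exists_isApproxResolution hB hs hε
    obtain ⟨κ, _, m, b, hm, hb⟩ := exists_isApproxResolution hC ht hε
    exact ha.norm_mul_mul_le hb X hδ fun i j => hsep _ (hl i) _ (hm j)
  have hcont : Continuous fun ε : ℝ => π / 2 * (‖B * X - X * C‖ + 2 * ε * ‖X‖) := by fun_prop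
  have hlim := (hcont.tendsto 0).mono_left (nhdsWithin_le_nhds (s := Ioi 0))
  rw [mul_zero, zero_mul, add_zero] at hlim
  exact ge_of_tendsto hlim (eventually_mem_nhdsWithin.mono hbound)

lemma norm_spectralProj_mul_spectralProj_le (hB : IsSelfAdjoint B) (hC : IsSelfAdjoint C)
    (hs : SplitsSpectrum B s) (ht : SplitsSpectrum C t) (hδ : 0 < δ)
    (hsep : ∀ x ∈ spectrum ℝ B ∩ s, ∀ y ∈ spectrum ℝ C ∩ t, δ ≤ |x - y|) :
    ‖spectralProj B s * spectralProj C t‖ ≤ π / 2 * (‖B - C‖ / δ) := by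
  have h := norm_spectralProj_mul_mul_spectralProj_le hB hC hs ht hδ hsep 1
  rw [mul_one, mul_one, one_mul] at h
  rwa [← mul_div_assoc, le_div_iff₀' hδ]

end Sylvester

section OffDiagonal

open Set
open scoped InnerProductSpace

variable {H : Type*} [NormedAddCommGroup H] [InnerProductSpace ℂ H]
  {A B C D E P Q T V : H →L[ℂ] H} {s ω : Set ℝ} {d δ δ₁ δ₂ η : ℝ}

/-- The operator `V` is off-diagonal with respect to the decomposition `H = Ran P ⊕ ker P`. -/
def IsOffDiagonal (P V : H →L[ℂ] H) : Prop :=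
  P * V * P = 0 ∧ (1 - P) * V * (1 - P) = 0

lemma IsOffDiagonal.neg (hoff : IsOffDiagonal P V) : IsOffDiagonal P (-V) := by
  simpa [IsOffDiagonal] using hoff

lemma IsOffDiagonal.smul (hoff : IsOffDiagonal P V) (t : ℝ) : IsOffDiagonal P (t • V) := by
  simp [IsOffDiagonal, hoff.1, hoff.2]

lemma apply_add_one_sub_apply (E : H →L[ℂ] H) (x : H) : E x + (1 - E) x = x :=
  add_sub_cancel (E x) x

variable [CompleteSpace H]

lemma inner_apply_one_sub_apply_eq_zero (hE : IsStarProjection E) (x y : H) :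
    ⟪E x, (1 - E) y⟫_ℂ = 0 := by
  have hadj : ⟪E x, (1 - E) y⟫_ℂ = ⟪x, (E * (1 - E)) y⟫_ℂ :=
    hE.isSelfAdjoint.isSymmetric x _
  rw [hadj, hE.mul_one_sub_self, zero_apply, inner_zero_right]

lemma norm_sq_add_norm_sq_of_isStarProjection (hE : IsStarProjection E) (x y : H) :
    ‖E x + (1 - E) y‖ ^ 2 = ‖E x‖ ^ 2 + ‖(1 - E) y‖ ^ 2 := by
  simpa only [pow_two] using norm_add_sq_eq_norm_sq_add_norm_sq_of_inner_eq_zero (𝕜 := ℂ) _ _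
    (inner_apply_one_sub_apply_eq_zero hE x y)

lemma norm_sq_eq_add_of_isStarProjection (hE : IsStarProjection E) (x : H) :
    ‖x‖ ^ 2 = ‖E x‖ ^ 2 + ‖(1 - E) x‖ ^ 2 := by
  rw [← norm_sq_add_norm_sq_of_isStarProjection hE, apply_add_one_sub_apply]

lemma re_inner_apply_comm (hT : IsSelfAdjoint T) (x y : H) :
    (⟪x, T y⟫_ℂ).re = (⟪y, T x⟫_ℂ).re := by
  rw [← inner_conj_symm, Complex.conj_re]
  exact congrArg Complex.re (hT.isSymmetric y x)

lemma mul_norm_sq_le_re_inner_cfc_spectralProj (hs : SplitsSpectrum B s) {f : ℝ → ℝ}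
    (hf : ContinuousOn f (spectrum ℝ B)) {c : ℝ} (hc : ∀ u ∈ spectrum ℝ B ∩ s, c ≤ f u)
    (hB : IsSelfAdjoint B) (x : H) :
    c * ‖spectralProj B s x‖ ^ 2 ≤
      (⟪spectralProj B s x, cfc f B (spectralProj B s x)⟫_ℂ).re := by
  set χ : ℝ → ℝ := s.indicator fun _ => 1 with hχ
  have hnonneg : 0 ≤ cfc (fun u => χ u * (f u - c) * χ u) B := cfc_nonneg fun u hu => by
    by_cases hus : u ∈ s
    · simpa [hχ, hus] using hc u ⟨hu, hus⟩
    · simp [hχ, hus]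
  have hcompress : cfc (fun u => χ u * (f u - c) * χ u) B =
      spectralProj B s * (cfc f B - algebraMap ℝ _ c) * spectralProj B s := by
    have hfc : ContinuousOn (fun u => f u - c) (spectrum ℝ B) := hf.sub continuousOn_const
    rw [cfc_mul (fun u => χ u * (f u - c)) χ B (hs.mul hfc) hs, cfc_mul χ _ B hs hfc,
      cfc_sub f _ B hf continuousOn_const, cfc_const c B]
    rfl
  rw [hcompress, nonneg_iff_isPositive] at hnonneg
  have hpos := hnonneg.re_inner_nonneg_right x
  have hadj : ⟪x, (spectralProj B s * (cfc f B - algebraMap ℝ _ c) * spectralProj B s) x⟫_ℂ =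
      ⟪spectralProj B s x, cfc f B (spectralProj B s x)⟫_ℂ -
        c * ⟪spectralProj B s x, spectralProj B s x⟫_ℂ := by
    rw [← inner_smul_right, ← inner_sub_right]
    exact ((isSelfAdjoint_spectralProj B s).isSymmetric x _).symm
  rw [hadj, map_sub, RCLike.re_to_complex, RCLike.re_to_complex, Complex.re_ofReal_mul] at hpos
  rw [← inner_self_eq_norm_sq (𝕜 := ℂ), RCLike.re_to_complex]
  linarith

lemma re_inner_offDiagonal (hP : IsStarProjection P) (hV : IsSelfAdjoint V)
    (hoff : IsOffDiagonal P V) (x : H) :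
    (⟪x, V x⟫_ℂ).re = 2 * (⟪P x, V ((1 - P) x)⟫_ℂ).re := by
  have hzero : ∀ R : H →L[ℂ] H, IsStarProjection R → R * V * R = 0 → ⟪R x, V (R x)⟫_ℂ = 0 := by
    intro R hR hoff
    have hadj : ⟪R x, V (R x)⟫_ℂ = ⟪x, (R * V * R) x⟫_ℂ := hR.isSelfAdjoint.isSymmetric x _
    rw [hadj, hoff, zero_apply, inner_zero_right]
  conv_lhs => rw [← apply_add_one_sub_apply P x]
  rw [map_add, inner_add_left, inner_add_right, inner_add_right, hzero P hP hoff.1,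
    hzero _ hP.one_sub hoff.2, zero_add, add_zero, Complex.add_re,
    re_inner_apply_comm hV ((1 - P) x), two_mul]

lemma re_inner_of_commute (hP : IsStarProjection P) (hPD : Commute P D) (x : H) :
    (⟪x, D x⟫_ℂ).re = (⟪P x, D (P x)⟫_ℂ).re + (⟪(1 - P) x, D ((1 - P) x)⟫_ℂ).re := by
  have hcross : ∀ R : H →L[ℂ] H, IsStarProjection R → Commute R D →
      ⟪R x, D ((1 - R) x)⟫_ℂ = 0 := by
    intro R hR hRD
    have hcomm : D ((1 - R) x) = (1 - R) (D x) :=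
      (DFunLike.congr_fun ((Commute.one_left D).sub_left hRD).eq x).symm
    rw [hcomm, inner_apply_one_sub_apply_eq_zero hR]
  have hcross' := hcross _ hP.one_sub ((Commute.one_left D).sub_left hPD)
  rw [sub_sub_cancel] at hcross'
  conv_lhs => rw [← apply_add_one_sub_apply P x]
  rw [map_add, inner_add_left, inner_add_right, inner_add_right, hcross P hP hPD, hcross',
    add_zero, zero_add, Complex.add_re]

lemma mul_norm_sq_le_re_inner_add_offDiagonal (hP : IsStarProjection P) (hPD : Commute P D)
    (hV : IsSelfAdjoint V) (hoff : IsOffDiagonal P V) {α β : ℝ} (hα : 0 ≤ α) (hβ : 0 ≤ β)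
    (hnorm : ‖V‖ ^ 2 ≤ α * β) {x : H}
    (hx₁ : (α + η) * ‖P x‖ ^ 2 ≤ (⟪P x, D (P x)⟫_ℂ).re)
    (hx₂ : (β + η) * ‖(1 - P) x‖ ^ 2 ≤ (⟪(1 - P) x, D ((1 - P) x)⟫_ℂ).re) :
    η * ‖x‖ ^ 2 ≤ (⟪x, (D + V) x⟫_ℂ).re := by
  have hcross : |(⟪P x, V ((1 - P) x)⟫_ℂ).re| ≤ ‖V‖ * (‖P x‖ * ‖(1 - P) x‖) :=
    calc |(⟪P x, V ((1 - P) x)⟫_ℂ).re| ≤ ‖P x‖ * ‖V ((1 - P) x)‖ :=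
          (Complex.abs_re_le_norm _).trans (norm_inner_le_norm _ _)
      _ ≤ ‖P x‖ * (‖V‖ * ‖(1 - P) x‖) := by gcongr; exact V.le_opNorm _
      _ = ‖V‖ * (‖P x‖ * ‖(1 - P) x‖) := by ring
  have hsqrt : ‖V‖ ≤ √α * √β := by
    rw [← Real.sqrt_mul hα]
    exact Real.le_sqrt_of_sq_le hnorm
  have hamgm : 2 * (‖V‖ * (‖P x‖ * ‖(1 - P) x‖)) ≤ α * ‖P x‖ ^ 2 + β * ‖(1 - P) x‖ ^ 2 :=
    calc 2 * (‖V‖ * (‖P x‖ * ‖(1 - P) x‖))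
        ≤ 2 * (√α * √β * (‖P x‖ * ‖(1 - P) x‖)) := by gcongr
      _ = 2 * (√α * ‖P x‖) * (√β * ‖(1 - P) x‖) := by ring
      _ ≤ (√α * ‖P x‖) ^ 2 + (√β * ‖(1 - P) x‖) ^ 2 := two_mul_le_add_sq _ _
      _ = α * ‖P x‖ ^ 2 + β * ‖(1 - P) x‖ ^ 2 := by
          rw [mul_pow, mul_pow, Real.sq_sqrt hα, Real.sq_sqrt hβ]
  rw [add_apply, inner_add_right, Complex.add_re, re_inner_of_commute hP hPD,
    re_inner_offDiagonal hP hV hoff, norm_sq_eq_add_of_isStarProjection hP x]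
  linarith [neg_abs_le (⟪P x, V ((1 - P) x)⟫_ℂ).re]

-- The symmetry `E - (1 - E)` turns the indefinite form of `T` into a coercive one.
lemma isUnit_of_mul_norm_sq_le_re_inner (hE : IsStarProjection E) (hT : IsSelfAdjoint T)
    (hη : 0 < η) (hpos : ∀ x, η * ‖E x‖ ^ 2 ≤ (⟪E x, T (E x)⟫_ℂ).re)
    (hneg : ∀ x, (⟪(1 - E) x, T ((1 - E) x)⟫_ℂ).re ≤ -(η * ‖(1 - E) x‖ ^ 2)) : IsUnit T := by
  set J := E - (1 - E) with hJ
  have hJsa : IsSelfAdjoint J := hE.isSelfAdjoint.sub hE.one_sub.isSelfAdjoint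
  have hJJ : J * J = 1 := by
    simp only [hJ, sub_mul, mul_sub, one_mul, mul_one, hE.isIdempotentElem.eq]
    abel
  have hform : ∀ x, η * ‖x‖ ^ 2 ≤ (⟪J x, T x⟫_ℂ).re := by
    intro x
    have hx : T x = T (E x) + T ((1 - E) x) := by
      rw [← map_add, apply_add_one_sub_apply]
    rw [hx, hJ, sub_apply, inner_sub_left, inner_add_right, inner_add_right, Complex.sub_re,
      Complex.add_re, Complex.add_re, re_inner_apply_comm hT (E x) ((1 - E) x),
      norm_sq_eq_add_of_isStarProjection hE x]
    linarith [hpos x, hneg x]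
  have hJT : IsUnit (J * T) := by
    refine isUnit_of_forall_le_norm_inner_map (c := ⟨η, hη.le⟩) _ hη fun x => ?_
    have hadj : ⟪(J * T) x, x⟫_ℂ = ⟪T x, J x⟫_ℂ := hJsa.isSymmetric _ _
    rw [hadj, norm_inner_symm, mul_comm]
    exact (hform x).trans (Complex.re_le_norm _)
  have hT' : T = J * (J * T) := by rw [← mul_assoc, hJJ, one_mul]
  rw [hT']
  exact (Units.isUnit ⟨J, J, hJJ, hJJ⟩).mul hJT

lemma HasSpectralGap.mul_norm_sq_le_re_inner_cfc_add (hgap : HasSpectralGap A ω d) (hd : 0 < d)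
    (hA : IsSelfAdjoint A) (hV : IsSelfAdjoint V) (hoff : IsOffDiagonal (spectralProj A ω) V)
    (hδ : 0 ≤ δ) (hnorm : ‖V‖ ^ 2 ≤ δ * (δ + d)) (hs : SplitsSpectrum A s) {f : ℝ → ℝ}
    (hf : ContinuousOn f (spectrum ℝ A)) (hle : ∀ u ∈ spectrum ℝ A ∩ s, δ + η ≤ f u)
    (hexp : ∀ u v, |u - v| ≤ |f u - f v|) (x : H) :
    η * ‖spectralProj A s x‖ ^ 2 ≤
      (⟪spectralProj A s x, (cfc f A + V) (spectralProj A s x)⟫_ℂ).re := by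
  have hω := hgap.splitsSpectrum hd
  have hcomm : Commute (spectralProj A ω) (cfc f A) := cfc_commute_cfc _ _ A
  have hproj₁ : spectralProj A ω (spectralProj A s x) = spectralProj A (ω ∩ s) x :=
    DFunLike.congr_fun (spectralProj_mul_spectralProj hω hs) x
  have hproj₂ : (1 - spectralProj A ω) (spectralProj A s x) = spectralProj A (ωᶜ ∩ s) x := by
    rw [← spectralProj_compl hA hω]
    exact DFunLike.congr_fun (spectralProj_mul_spectralProj hω.compl hs) x
  have hform : ∀ {t c}, SplitsSpectrum A t → (∀ u ∈ spectrum ℝ A ∩ (t ∩ s), c ≤ f u) →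
      c * ‖spectralProj A (t ∩ s) x‖ ^ 2 ≤
        (⟪spectralProj A (t ∩ s) x, cfc f A (spectralProj A (t ∩ s) x)⟫_ℂ).re :=
    fun ht hc => mul_norm_sq_le_re_inner_cfc_spectralProj (ht.inter hs) hf hc hA x
  have hcases : (∀ u ∈ spectrum ℝ A ∩ (ωᶜ ∩ s), δ + d + η ≤ f u) ∨
      ∀ u ∈ spectrum ℝ A ∩ (ω ∩ s), δ + d + η ≤ f u := by
    by_contra! hcon
    obtain ⟨⟨v, ⟨hv, hvω, hvs⟩, hfv⟩, u, ⟨hu, huω, hus⟩, hfu⟩ := hcon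
    have hsep := (hgap u ⟨hu, huω⟩ v ⟨hv, hvω⟩).trans (hexp u v)
    rcases le_abs.1 hsep with h | h <;> linarith [hle u ⟨hu, hus⟩, hle v ⟨hv, hvs⟩]
  have hδd : 0 ≤ δ + d := by positivity
  rcases hcases with hfar | hfar
  · refine mul_norm_sq_le_re_inner_add_offDiagonal (isStarProjection_spectralProj hω) hcomm hV
      hoff hδ hδd hnorm ?_ ?_
    · rw [hproj₁]
      exact hform hω fun u hu => hle u ⟨hu.1, hu.2.2⟩
    · rw [hproj₂]
      exact hform hω.compl hfar
  · refine mul_norm_sq_le_re_inner_add_offDiagonal (isStarProjection_spectralProj hω) hcomm hV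
      hoff hδd hδ (by rwa [mul_comm]) ?_ ?_
    · rw [hproj₁]
      exact hform hω hfar
    · rw [hproj₂]
      exact hform hω.compl fun u hu => hle u ⟨hu.1, hu.2.2⟩

lemma HasSpectralGap.isUnit_sub_algebraMap_add (hgap : HasSpectralGap A ω d) (hd : 0 < d)
    (hA : IsSelfAdjoint A) (hV : IsSelfAdjoint V) (hoff : IsOffDiagonal (spectralProj A ω) V)
    (hδ : 0 ≤ δ) (hnorm : ‖V‖ ^ 2 ≤ δ * (δ + d)) (hη : 0 < η) {l : ℝ}
    (hl : ∀ u ∈ spectrum ℝ A, δ + η ≤ |u - l|) :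
    IsUnit (A - algebraMap ℝ (H →L[ℂ] H) l + V) := by
  have habove : ∀ u ∈ spectrum ℝ A ∩ Ioi l, δ + η ≤ u - l := fun u hu =>
    (hl u hu.1).trans_eq (abs_of_pos (sub_pos.2 hu.2))
  have hbelow : ∀ u ∈ spectrum ℝ A ∩ (Ioi l)ᶜ, δ + η ≤ l - u := fun u hu =>
    (hl u hu.1).trans_eq (abs_sub_comm u l ▸ abs_of_nonneg (sub_nonneg.2 (notMem_Ioi.1 hu.2)))
  have hsplits : SplitsSpectrum A (Ioi l) := by
    refine HasSpectralGap.splitsSpectrum (d := η) (fun x hx y hy => ?_) hη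
    exact le_abs.2 (Or.inl (by linarith [habove x hx, hbelow y hy]))
  have hplus : cfc (fun u => u - l) A = A - algebraMap ℝ (H →L[ℂ] H) l := by
    rw [cfc_sub (fun u => u) (fun _ => l) A, cfc_id' ℝ A, cfc_const l A]
  have hminus : cfc (fun u => l - u) A = algebraMap ℝ (H →L[ℂ] H) l - A := by
    rw [cfc_sub (fun _ => l) (fun u => u) A, cfc_id' ℝ A, cfc_const l A]
  refine isUnit_of_mul_norm_sq_le_re_inner (isStarProjection_spectralProj hsplits)
    ((hA.sub (.algebraMap _ (.all l))).add hV) hη (fun x => ?_) fun x => ?_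
  · rw [← hplus]
    exact hgap.mul_norm_sq_le_re_inner_cfc_add hd hA hV hoff hδ hnorm hsplits
      (by fun_prop) habove (fun u v => by rw [sub_sub_sub_cancel_right]) x
  · have hneg := hgap.mul_norm_sq_le_re_inner_cfc_add (V := -V) hd hA hV.neg hoff.neg hδ
      (by rwa [norm_neg]) hsplits.compl (by fun_prop) hbelow
      (fun u v => by rw [sub_sub_sub_cancel_left, abs_sub_comm]) x
    have hflip : algebraMap ℝ (H →L[ℂ] H) l - A + -V =
        -(A - algebraMap ℝ (H →L[ℂ] H) l + V) := by abel
    rw [hminus, hflip, spectralProj_compl hA hsplits, neg_apply, inner_neg_right,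
      Complex.neg_re] at hneg
    exact le_neg_of_le_neg hneg

theorem HasSpectralGap.spectrum_add_subset_cthickening (hgap : HasSpectralGap A ω d) (hd : 0 < d)
    (hA : IsSelfAdjoint A) (hV : IsSelfAdjoint V) (hoff : IsOffDiagonal (spectralProj A ω) V)
    (hδ : 0 ≤ δ) (hnorm : ‖V‖ ^ 2 ≤ δ * (δ + d)) :
    spectrum ℝ (A + V) ⊆ Metric.cthickening δ (spectrum ℝ A) := by
  intro l hl
  contrapose! hl
  rw [Metric.cthickening_eq_iInter_thickening hδ] at hl
  simp only [mem_iInter, not_forall] at hl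
  obtain ⟨ε, hε, hlε⟩ := hl
  have hfar : ∀ u ∈ spectrum ℝ A, δ + (ε - δ) ≤ |u - l| := by
    intro u hu
    rw [add_sub_cancel, ← Real.dist_eq, dist_comm]
    by_contra! hlt
    exact hlε (Metric.mem_thickening_iff.2 ⟨u, hu, hlt⟩)
  have hunit := hgap.isUnit_sub_algebraMap_add hd hA hV hoff hδ hnorm (sub_pos.2 hε) hfar
  rw [spectrum.notMem_iff, ← IsUnit.neg_iff]
  convert hunit using 1
  abel

lemma HasSpectralGap.sub_sub_le_abs_sub (hgap : HasSpectralGap A ω d) (hω : ω ⊆ spectrum ℝ A)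
    (hδ₁ : 0 ≤ δ₁) (hδ₁d : δ₁ < d / 2) (hδ₂ : 0 ≤ δ₂) (hδ₂d : δ₂ < d / 2) {x y : ℝ}
    (hx : x ∈ Metric.cthickening δ₁ (spectrum ℝ A) ∩ Metric.thickening (d / 2) ω)
    (hy : y ∈ Metric.cthickening δ₂ (spectrum ℝ A) \ Metric.thickening (d / 2) ω) :
    d - δ₁ - δ₂ ≤ |x - y| := by
  have hcompact := spectrum.isCompact (𝕜 := ℝ) A
  rw [hcompact.cthickening_eq_biUnion_closedBall hδ₁] at hx
  rw [hcompact.cthickening_eq_biUnion_closedBall hδ₂] at hy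
  simp only [mem_inter_iff, mem_sdiff, mem_iUnion₂, Metric.mem_closedBall,
    Metric.mem_thickening_iff, exists_prop, Real.dist_eq, not_exists, not_and, not_lt] at hx hy
  obtain ⟨⟨u, hu, hxu⟩, w, hw, hxw⟩ := hx
  obtain ⟨⟨v, hv, hyv⟩, hyω⟩ := hy
  have huω : u ∈ ω := by
    by_contra huω
    have hwu := hgap w ⟨hω hw, hw⟩ u ⟨hu, huω⟩
    linarith [abs_sub_le w x u, abs_sub_comm w x]
  have hvω : v ∉ ω := fun hvω => by linarith [hyω v hvω]
  linarith [hgap u ⟨hu, huω⟩ v ⟨hv, hvω⟩, abs_sub_le u x v, abs_sub_le x y v, abs_sub_comm u x]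

lemma norm_sub_le_of_isStarProjection (hP : IsStarProjection P) (hQ : IsStarProjection Q) {r : ℝ}
    (hPQ : ‖P * (1 - Q)‖ ≤ r) (hQP : ‖(1 - P) * Q‖ ≤ r) : ‖P - Q‖ ≤ r := by
  have hr : 0 ≤ r := (norm_nonneg _).trans hPQ
  refine opNorm_le_bound _ hr fun x => ?_
  have hsplit : (P - Q) x = P ((P * (1 - Q)) ((1 - Q) x)) + (1 - P) ((-((1 - P) * Q)) (Q x)) := by
    have hmul : P - Q = P * (P * (1 - Q) * (1 - Q)) + (1 - P) * -((1 - P) * Q * Q) := by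
      rw [mul_assoc P (1 - Q), hQ.one_sub.isIdempotentElem.eq, mul_assoc (1 - P) Q,
        hQ.isIdempotentElem.eq, mul_neg, ← mul_assoc, ← mul_assoc, hP.isIdempotentElem.eq,
        hP.one_sub.isIdempotentElem.eq]
      noncomm_ring
    exact DFunLike.congr_fun hmul x
  have hle : ∀ {R S : H →L[ℂ] H} (_ : IsStarProjection R) (_ : ‖S‖ ≤ r) (y : H),
      ‖R (S y)‖ ^ 2 ≤ r ^ 2 * ‖y‖ ^ 2 := by
    intro R S hR hS y
    rw [← mul_pow]
    gcongr
    calc ‖R (S y)‖ ≤ 1 * ‖S y‖ := R.le_of_opNorm_le hR.norm_le _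
      _ ≤ r * ‖y‖ := (one_mul _).trans_le (S.le_of_opNorm_le hS y)
  refine le_of_sq_le_sq ?_ (by positivity)
  rw [hsplit, norm_sq_add_norm_sq_of_isStarProjection hP, mul_pow,
    norm_sq_eq_add_of_isStarProjection hQ x]
  linarith [hle hP hPQ ((1 - Q) x), hle hP.one_sub ((norm_neg _).trans_le hQP) (Q x)]

lemma norm_spectralProj_sub_spectralProj_le (hB : IsSelfAdjoint B) (hC : IsSelfAdjoint C)
    (hBs : SplitsSpectrum B s) (hCs : SplitsSpectrum C s) (hδ : 0 < δ)
    (hBC : ∀ x ∈ spectrum ℝ B ∩ s, ∀ y ∈ spectrum ℝ C \ s, δ ≤ |x - y|)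
    (hCB : ∀ x ∈ spectrum ℝ C ∩ s, ∀ y ∈ spectrum ℝ B \ s, δ ≤ |x - y|) :
    ‖spectralProj B s - spectralProj C s‖ ≤ Real.pi / 2 * (‖B - C‖ / δ) := by
  refine norm_sub_le_of_isStarProjection (isStarProjection_spectralProj hBs)
    (isStarProjection_spectralProj hCs) ?_ ?_
  · rw [← spectralProj_compl hC hCs]
    exact norm_spectralProj_mul_spectralProj_le hB hC hBs hCs.compl hδ hBC
  · rw [← spectralProj_compl hB hBs]
    refine norm_spectralProj_mul_spectralProj_le hB hC hBs.compl hCs hδ fun x hx y hy => ?_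
    rw [abs_sub_comm]
    exact hCB y hy x hx

lemma HasSpectralGap.splitsSpectrum_thickening (hgap : HasSpectralGap A ω d)
    (hω : ω ⊆ spectrum ℝ A) (hδ : 0 ≤ δ) (hδd : δ < d / 2)
    (hBA : spectrum ℝ B ⊆ Metric.cthickening δ (spectrum ℝ A)) :
    SplitsSpectrum B (Metric.thickening (d / 2) ω) :=
  HasSpectralGap.splitsSpectrum (d := d - δ - δ) (fun _ hx _ hy => hgap.sub_sub_le_abs_sub hω
    hδ hδd hδ hδd ⟨hBA hx.1, hx.2⟩ ⟨hBA hy.1, hy.2⟩) (by linarith)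

theorem HasSpectralGap.norm_spectralProj_thickening_sub_le (hgap : HasSpectralGap A ω d)
    (hω : ω ⊆ spectrum ℝ A) (hB : IsSelfAdjoint B) (hC : IsSelfAdjoint C)
    (hδ₁ : 0 ≤ δ₁) (hδ₁d : δ₁ < d / 2) (hδ₂ : 0 ≤ δ₂) (hδ₂d : δ₂ < d / 2)
    (hBA : spectrum ℝ B ⊆ Metric.cthickening δ₁ (spectrum ℝ A))
    (hCA : spectrum ℝ C ⊆ Metric.cthickening δ₂ (spectrum ℝ A)) :
    ‖spectralProj B (Metric.thickening (d / 2) ω) - spectralProj C (Metric.thickening (d / 2) ω)‖ ≤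
      Real.pi / 2 * (‖B - C‖ / (d - δ₁ - δ₂)) := by
  refine norm_spectralProj_sub_spectralProj_le hB hC
    (hgap.splitsSpectrum_thickening hω hδ₁ hδ₁d hBA)
    (hgap.splitsSpectrum_thickening hω hδ₂ hδ₂d hCA) (by linarith) (fun x hx y hy =>
      hgap.sub_sub_le_abs_sub hω hδ₁ hδ₁d hδ₂ hδ₂d ⟨hBA hx.1, hx.2⟩ ⟨hCA hy.1, hy.2⟩)
    fun x hx y hy => ?_
  rw [sub_right_comm]
  exact hgap.sub_sub_le_abs_sub hω hδ₂ hδ₂d hδ₁ hδ₁d ⟨hCA hx.1, hx.2⟩ ⟨hBA hy.1, hy.2⟩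

end OffDiagonal

section AngleMetric

open InnerProductGeometry Real

attribute [local instance] InnerProductSpace.complexToReal

variable {H : Type*} [NormedAddCommGroup H] [InnerProductSpace ℂ H] [CompleteSpace H]
  {E P Q R T : H →L[ℂ] H} {u z : H}

lemma real_inner_apply_one_sub_apply_eq_zero (hE : IsStarProjection E) (x y : H) :
    inner ℝ (E x) ((1 - E) y) = 0 :=
  congrArg Complex.re (inner_apply_one_sub_apply_eq_zero hE x y)

lemma sin_angle_apply_mul_norm (hE : IsStarProjection E) (u : H) :
    sin (angle u (E u)) * ‖u‖ = ‖(1 - E) u‖ := by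
  have h := sin_angle_add_mul_norm_of_inner_eq_zero
    (real_inner_apply_one_sub_apply_eq_zero hE u u)
  rwa [apply_add_one_sub_apply, angle_comm] at h

lemma angle_apply_le_pi_div_two (hE : IsStarProjection E) (u : H) :
    angle u (E u) ≤ π / 2 := by
  have h := angle_add_le_pi_div_two_of_inner_eq_zero
    (real_inner_apply_one_sub_apply_eq_zero hE u u)
  rwa [apply_add_one_sub_apply, angle_comm] at h

lemma norm_one_sub_apply_le_sin_angle_mul_norm (hE : IsStarProjection E) (hz : E z = z) (u : H) :
    ‖(1 - E) u‖ ≤ sin (angle u z) * ‖u‖ := by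
  have hpyth := norm_sq_eq_add_of_isStarProjection hE u
  rcases eq_or_ne z 0 with rfl | hz0
  · rw [angle_zero_right, sin_pi_div_two, one_mul]
    exact le_of_sq_le_sq (by linarith [sq_nonneg ‖E u‖]) (norm_nonneg u)
  have hcos : |cos (angle u z) * ‖u‖| ≤ ‖E u‖ := by
    have hadj : inner ℝ u z = inner ℝ (E u) z := by
      have horth := real_inner_apply_one_sub_apply_eq_zero hE z u
      rw [hz, real_inner_comm] at horth
      conv_lhs => rw [← apply_add_one_sub_apply E u, inner_add_left, horth, add_zero]
    refine le_of_mul_le_mul_right ?_ (norm_pos_iff.2 hz0)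
    calc |cos (angle u z) * ‖u‖| * ‖z‖ = |inner ℝ u z| := by
          rw [← cos_angle_mul_norm_mul_norm, ← mul_assoc, abs_mul _ ‖z‖, abs_norm]
      _ ≤ ‖E u‖ * ‖z‖ := hadj ▸ abs_real_inner_le_norm _ _
  refine le_of_sq_le_sq ?_ (mul_nonneg (sin_angle_nonneg u z) (norm_nonneg u))
  have hcos_sq := sq_le_sq.2 (hcos.trans (le_abs_self _))
  rw [mul_pow] at hcos_sq ⊢
  linear_combination hcos_sq - hpyth - ‖u‖ ^ 2 * sin_sq_add_cos_sq (angle u z)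

lemma angle_apply_le_arcsin_norm_sub (hE : IsStarProjection E) (hu : T u = u) (hu0 : u ≠ 0) :
    angle u (E u) ≤ arcsin ‖T - E‖ := by
  rw [le_arcsin_iff_sin_le' ⟨by linarith [pi_pos, angle_nonneg u (E u)],
    angle_apply_le_pi_div_two hE u⟩]
  refine le_of_mul_le_mul_right ?_ (norm_pos_iff.2 hu0)
  have hTE : (1 - E) u = (T - E) u := congrArg (· - E u) hu.symm
  rw [sin_angle_apply_mul_norm hE, hTE]
  exact (T - E).le_opNorm u

lemma angle_apply_apply_le_arcsin_add_arcsin (hR : IsStarProjection R) (hQ : IsStarProjection Q)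
    (hu : P u = u) (hu0 : u ≠ 0) :
    angle u (Q (R u)) ≤ arcsin ‖P - R‖ + arcsin ‖R - Q‖ := by
  have hPR := angle_apply_le_arcsin_norm_sub hR hu hu0
  rcases eq_or_ne (R u) 0 with hRu | hRu
  · rw [hRu] at hPR ⊢
    rw [map_zero]
    exact hPR.trans (le_add_of_nonneg_right (arcsin_nonneg.2 (norm_nonneg _)))
  · have hRR : R (R u) = R u := DFunLike.congr_fun hR.isIdempotentElem.eq u
    exact (angle_le_angle_add_angle u (R u) _).trans
      (add_le_add hPR (angle_apply_le_arcsin_norm_sub hQ hRR hRu))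

lemma norm_one_sub_mul_le_sin_arcsin_add_arcsin (hP : IsStarProjection P)
    (hR : IsStarProjection R) (hQ : IsStarProjection Q)
    (hle : arcsin ‖P - R‖ + arcsin ‖R - Q‖ ≤ π / 2) :
    ‖(1 - Q) * P‖ ≤ sin (arcsin ‖P - R‖ + arcsin ‖R - Q‖) := by
  have hnonneg : 0 ≤ arcsin ‖P - R‖ + arcsin ‖R - Q‖ :=
    add_nonneg (arcsin_nonneg.2 (norm_nonneg _)) (arcsin_nonneg.2 (norm_nonneg _))
  have hsin := sin_nonneg_of_nonneg_of_le_pi hnonneg (hle.trans (by linarith [pi_pos]))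
  refine opNorm_le_bound _ hsin fun x => ?_
  rw [mul_apply_eq_comp]
  rcases eq_or_ne (P x) 0 with hx | hx
  · rw [hx, map_zero, norm_zero]
    positivity
  have hPP : P (P x) = P x := DFunLike.congr_fun hP.isIdempotentElem.eq x
  have hQQ : Q (Q (R (P x))) = Q (R (P x)) := DFunLike.congr_fun hQ.isIdempotentElem.eq _
  calc ‖(1 - Q) (P x)‖ ≤ sin (angle (P x) (Q (R (P x)))) * ‖P x‖ :=
        norm_one_sub_apply_le_sin_angle_mul_norm hQ hQQ _
    _ ≤ sin (arcsin ‖P - R‖ + arcsin ‖R - Q‖) * ‖P x‖ := by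
        gcongr
        exact sin_le_sin_of_le_of_le_pi_div_two
          (by linarith [pi_pos, angle_nonneg (P x) (Q (R (P x)))]) hle
          (angle_apply_apply_le_arcsin_add_arcsin hR hQ hPP hx)
    _ ≤ sin (arcsin ‖P - R‖ + arcsin ‖R - Q‖) * ‖x‖ := by
        gcongr
        exact (P.le_of_opNorm_le hP.norm_le x).trans_eq (one_mul _)

lemma norm_mul_one_sub_comm (hP : IsSelfAdjoint P) (hQ : IsSelfAdjoint Q) :
    ‖P * (1 - Q)‖ = ‖(1 - Q) * P‖ := by
  rw [← norm_star, star_mul, hP.star_eq, star_sub, star_one, hQ.star_eq]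

theorem arcsin_norm_sub_le (hP : IsStarProjection P) (hR : IsStarProjection R)
    (hQ : IsStarProjection Q) :
    arcsin ‖P - Q‖ ≤ arcsin ‖P - R‖ + arcsin ‖R - Q‖ := by
  rcases le_or_gt (π / 2) (arcsin ‖P - R‖ + arcsin ‖R - Q‖) with hge | hlt
  · exact (arcsin_le_pi_div_two _).trans hge
  have hnonneg : 0 ≤ arcsin ‖P - R‖ + arcsin ‖R - Q‖ :=
    add_nonneg (arcsin_nonneg.2 (norm_nonneg _)) (arcsin_nonneg.2 (norm_nonneg _))
  rw [arcsin_le_iff_le_sin' ⟨by linarith [pi_pos], hlt⟩]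
  refine norm_sub_le_of_isStarProjection hP hQ ?_ ?_
  · rw [norm_mul_one_sub_comm hP.isSelfAdjoint hQ.isSelfAdjoint]
    exact norm_one_sub_mul_le_sin_arcsin_add_arcsin hP hR hQ hlt.le
  · rw [add_comm, norm_sub_rev P, norm_sub_rev R] at hlt ⊢
    exact norm_one_sub_mul_le_sin_arcsin_add_arcsin hQ hR hP hlt.le

lemma abs_arcsin_norm_sub_sub_arcsin_norm_sub_le (hP : IsStarProjection P)
    (hR : IsStarProjection R) (hQ : IsStarProjection Q) :
    |arcsin ‖P - Q‖ - arcsin ‖P - R‖| ≤ arcsin ‖R - Q‖ := by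
  have h₁ := arcsin_norm_sub_le hP hR hQ
  have h₂ := arcsin_norm_sub_le hP hQ hR
  rw [norm_sub_rev Q] at h₂
  exact abs_le.2 ⟨by linarith, by linarith⟩

end AngleMetric

section SlopeComparison

open Filter MeasureTheory Set Topology

variable {f k : ℝ → ℝ} {a b x : ℝ}

lemma hasDerivWithinAt_arcsin_sub_mul (hk : ContinuousWithinAt k (Ioi x) x) :
    HasDerivWithinAt (fun z => Real.arcsin ((z - x) * k z)) (k x) (Ioi x) x := by
  have hmul : HasDerivWithinAt (fun z => (z - x) * k z) (k x) (Ioi x) x := by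
    rw [hasDerivWithinAt_iff_tendsto_slope' self_notMem_Ioi]
    refine hk.tendsto.congr' ?_
    filter_upwards [self_mem_nhdsWithin] with z hz
    rw [slope_def_field, sub_self, zero_mul, sub_zero,
      mul_div_cancel_left₀ _ (sub_ne_zero.2 (mem_Ioi.1 hz).ne')]
  have harcsin : HasDerivAt Real.arcsin 1 ((x - x) * k x) := by
    simpa using Real.hasDerivAt_arcsin (x := 0) (by norm_num) (by norm_num)
  exact (harcsin.comp_hasDerivWithinAt x hmul).congr_deriv (one_mul _)

lemma continuousOn_of_abs_sub_le_arcsin (hk : ContinuousOn k (Icc a b))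
    (hf : ∀ s ∈ Icc a b, ∀ t ∈ Icc a b, s ≤ t → |f t - f s| ≤ Real.arcsin ((t - s) * k t)) :
    ContinuousOn f (Icc a b) := by
  obtain ⟨M, hM⟩ := isCompact_Icc.bddAbove_image hk
  have hbound : ∀ s ∈ Icc a b, ∀ t ∈ Icc a b, |f t - f s| ≤ Real.arcsin (|t - s| * M) := by
    intro s hs t ht
    wlog hst : s ≤ t generalizing s t
    · rw [abs_sub_comm, abs_sub_comm t s]
      exact this t ht s hs (le_of_not_ge hst)
    refine (hf s hs t ht hst).trans (Real.monotone_arcsin ?_)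
    rw [abs_of_nonneg (sub_nonneg.2 hst)]
    exact mul_le_mul_of_nonneg_left (hM (mem_image_of_mem k ht)) (sub_nonneg.2 hst)
  intro s hs
  have hlim : Tendsto (fun t => Real.arcsin (|t - s| * M)) (𝓝[Icc a b] s) (𝓝 0) := by
    have hcont : Continuous fun t => Real.arcsin (|t - s| * M) := by fun_prop
    simpa using (hcont.tendsto s).mono_left nhdsWithin_le_nhds
  rw [ContinuousWithinAt, tendsto_iff_dist_tendsto_zero]
  refine squeeze_zero' (Eventually.of_forall fun _ => dist_nonneg) ?_ hlim
  filter_upwards [self_mem_nhdsWithin] with t ht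
  exact hbound s hs t ht

theorem sub_le_integral_of_abs_sub_le_arcsin (hab : a ≤ b) (hk : ContinuousOn k (Icc a b))
    (hf : ∀ s ∈ Icc a b, ∀ t ∈ Icc a b, s ≤ t → |f t - f s| ≤ Real.arcsin ((t - s) * k t)) :
    f b - f a ≤ ∫ t in a..b, k t := by
  have hint : IntegrableOn k (uIcc a b) := uIcc_of_le hab ▸ hk.integrableOn_Icc
  have hprim : ContinuousOn (fun x => f a + ∫ t in a..x, k t) (Icc a b) :=
    continuousOn_const.add (uIcc_of_le hab ▸ intervalIntegral.continuousOn_primitive_interval hint)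
  have hkx : ∀ x ∈ Ico a b, ContinuousWithinAt k (Ioi x) x := fun x hx =>
    (hk x (Ico_subset_Icc_self hx)).mono_of_mem_nhdsWithin (Icc_mem_nhdsGT_of_mem hx)
  have hderiv : ∀ x ∈ Ico a b,
      HasDerivWithinAt (fun x => f a + ∫ t in a..x, k t) (k x) (Ici x) x := by
    intro x hx
    have hkax : IntervalIntegrable k volume a x :=
      (hk.mono (uIcc_of_le hx.1 ▸ Icc_subset_Icc_right hx.2.le)).intervalIntegrable
    have hmeas : StronglyMeasurableAtFilter k (𝓝[>] x) volume :=
      ⟨Icc a b, Icc_mem_nhdsGT_of_mem hx, hk.aestronglyMeasurable measurableSet_Icc⟩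
    exact (intervalIntegral.integral_hasDerivWithinAt_right hkax hmeas (hkx x hx)).const_add _
  have hslope : ∀ x ∈ Ico a b, ∀ r, k x < r → ∃ᶠ z in 𝓝[>] x, slope f x z < r := by
    intro x hx r hr
    have hlim := (hasDerivWithinAt_iff_tendsto_slope' self_notMem_Ioi).1
      (hasDerivWithinAt_arcsin_sub_mul (hkx x hx))
    refine Eventually.frequently ?_
    filter_upwards [hlim.eventually (gt_mem_nhds hr), Ioo_mem_nhdsGT hx.2] with z hzr hz
    refine lt_of_le_of_lt ?_ hzr
    have hle := (le_abs_self _).trans (hf x (Ico_subset_Icc_self hx) z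
      ⟨hx.1.trans hz.1.le, hz.2.le⟩ hz.1.le)
    rw [slope_def_field, slope_def_field, sub_self, zero_mul, Real.arcsin_zero, sub_zero]
    exact div_le_div_of_nonneg_right hle (sub_nonneg.2 hz.1.le)
  rw [sub_le_iff_le_add']
  exact image_le_of_liminf_slope_right_le_deriv_boundary
    (continuousOn_of_abs_sub_le_arcsin hk hf) (by simp) hprim hderiv hslope (right_mem_Icc.2 hab)

end SlopeComparison

section RotationRate

open MeasureTheory Set

variable {d v w τ : ℝ}

/-- Up to the factor `π / 2`, the rate at which the spectral subspaces of `A + t • V` can rotate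
when the perturbation has norm `τ` relative to the gap. Meaningful for `|τ| < √3 / 2` only: the
denominator vanishes at `√3 / 2`. -/
noncomputable def rotationRate (τ : ℝ) : ℝ :=
  (2 - √(1 + 4 * τ ^ 2))⁻¹

/-- The nonnegative root `δ` of `δ * (δ + d) = (w * d) ^ 2`, which bounds the displacement of the
spectrum under an off-diagonal perturbation of norm `w * d`. -/
noncomputable def spectralShift (d w : ℝ) : ℝ :=
  d * (√(1 + 4 * w ^ 2) - 1) / 2

lemma two_sub_sqrt_pos (hτ₀ : 0 ≤ τ) (hτ : τ < √3 / 2) : 0 < 2 - √(1 + 4 * τ ^ 2) := by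
  rw [sub_pos, Real.sqrt_lt' two_pos]
  have hsq : τ ^ 2 < (√3 / 2) ^ 2 := by gcongr
  rw [div_pow, Real.sq_sqrt zero_le_three] at hsq
  linarith

lemma rotationRate_pos (hτ₀ : 0 ≤ τ) (hτ : τ < √3 / 2) : 0 < rotationRate τ :=
  inv_pos.2 (two_sub_sqrt_pos hτ₀ hτ)

lemma continuousOn_rotationRate : ContinuousOn rotationRate (Ico 0 (√3 / 2)) :=
  ContinuousOn.inv₀ (by fun_prop) fun _ hτ => (two_sub_sqrt_pos hτ.1 hτ.2).ne'

lemma intervalIntegrable_rotationRate (hv : v ∈ Ico 0 (√3 / 2)) (hw : w ∈ Ico 0 (√3 / 2)) :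
    IntervalIntegrable rotationRate volume v w :=
  (continuousOn_rotationRate.mono (ordConnected_Ico.uIcc_subset hv hw)).intervalIntegrable

lemma integral_rotationRate_lt_integral (hv : 0 ≤ v) (hvw : v < w) (hw : w < √3 / 2) :
    ∫ τ in (0 : ℝ)..v, rotationRate τ < ∫ τ in (0 : ℝ)..w, rotationRate τ := by
  have h₀ : (0 : ℝ) ∈ Ico 0 (√3 / 2) := ⟨le_rfl, by positivity⟩
  have hv' : v ∈ Ico 0 (√3 / 2) := ⟨hv, hvw.trans hw⟩
  have hvw_int := intervalIntegrable_rotationRate hv' ⟨hv.trans hvw.le, hw⟩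
  rw [← intervalIntegral.integral_add_adjacent_intervals
    (intervalIntegrable_rotationRate h₀ hv') hvw_int, lt_add_iff_pos_right]
  exact intervalIntegral.intervalIntegral_pos_of_pos_on hvw_int
    (fun τ hτ => rotationRate_pos (hv.trans hτ.1.le) (hτ.2.trans hw)) hvw

lemma spectralShift_nonneg (hd : 0 ≤ d) (w : ℝ) : 0 ≤ spectralShift d w := by
  have hsqrt : 0 ≤ √(1 + 4 * w ^ 2) - 1 :=
    sub_nonneg.2 (Real.one_le_sqrt.2 (le_add_of_nonneg_right (by positivity)))
  unfold spectralShift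
  positivity

lemma spectralShift_mul_spectralShift_add (d w : ℝ) :
    spectralShift d w * (spectralShift d w + d) = (w * d) ^ 2 := by
  have hsqrt : √(1 + 4 * w ^ 2) ^ 2 = 1 + 4 * w ^ 2 := Real.sq_sqrt (by positivity)
  unfold spectralShift
  linear_combination d ^ 2 / 4 * hsqrt

lemma sub_two_mul_spectralShift (d w : ℝ) :
    d - 2 * spectralShift d w = d * (rotationRate w)⁻¹ := by
  rw [spectralShift, rotationRate, inv_inv]
  ring

lemma spectralShift_lt_half (hd : 0 < d) (hw₀ : 0 ≤ w) (hw : w < √3 / 2) :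
    spectralShift d w < d / 2 := by
  have hpos := mul_pos hd (inv_pos.2 (rotationRate_pos hw₀ hw))
  rw [← sub_two_mul_spectralShift] at hpos
  linarith

lemma spectralShift_le_spectralShift (hd : 0 ≤ d) (hv : 0 ≤ v) (hvw : v ≤ w) :
    spectralShift d v ≤ spectralShift d w := by
  unfold spectralShift
  gcongr

end RotationRate

section SubspacePerturbation

open Metric Real Set

variable {H : Type*} [NormedAddCommGroup H] [InnerProductSpace ℂ H]
  {A V : H →L[ℂ] H} {ω Ω : Set ℝ} {c d s t : ℝ}

lemma hasSpectralGap_setDist (hspec : spectrum ℝ A = ω ∪ Ω) :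
    HasSpectralGap A ω (setDist ω Ω) := by
  intro x hx y hy
  have hyΩ : y ∈ Ω := (hspec ▸ hy.1 : y ∈ ω ∪ Ω).resolve_left hy.2
  have hbdd : BddBelow (image2 dist ω Ω) :=
    ⟨0, forall_mem_image2.2 fun _ _ _ _ => dist_nonneg⟩
  exact csInf_le hbdd (mem_image2_of_mem hx.2 hyΩ)

variable [CompleteSpace H]

lemma HasSpectralGap.spectralProj_thickening (hgap : HasSpectralGap A ω d) (hd : 0 < d)
    (hω : ω ⊆ spectrum ℝ A) : spectralProj A (thickening (d / 2) ω) = spectralProj A ω := by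
  refine spectralProj_congr (Subset.antisymm (fun x hx => ⟨hx.1, ?_⟩)
    (inter_subset_inter_right _ (self_subset_thickening (half_pos hd) ω)))
  obtain ⟨z, hz, hxz⟩ := mem_thickening_iff.1 hx.2
  rw [dist_comm, Real.dist_eq] at hxz
  by_contra hxω
  linarith [hgap z ⟨hω hz, hz⟩ x ⟨hx.1, hxω⟩]

lemma HasSpectralGap.spectrum_add_smul_subset (hgap : HasSpectralGap A ω d) (hd : 0 < d)
    (hA : IsSelfAdjoint A) (hV : IsSelfAdjoint V) (hoff : IsOffDiagonal (spectralProj A ω) V)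
    (t : ℝ) : spectrum ℝ (A + t • V) ⊆
      cthickening (spectralShift d (t * (‖V‖ / d))) (spectrum ℝ A) := by
  refine hgap.spectrum_add_subset_cthickening hd hA (.smul (.all t) hV) (hoff.smul t)
    (spectralShift_nonneg hd.le _) (le_of_eq ?_)
  rw [spectralShift_mul_spectralShift_add, norm_smul, Real.norm_eq_abs, mul_assoc,
    div_mul_cancel₀ _ hd.ne', mul_pow, mul_pow, sq_abs]

lemma HasSpectralGap.norm_spectralProj_add_smul_sub_le (hgap : HasSpectralGap A ω d) (hd : 0 < d)
    (hω : ω ⊆ spectrum ℝ A) (hA : IsSelfAdjoint A) (hV : IsSelfAdjoint V)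
    (hoff : IsOffDiagonal (spectralProj A ω) V) (hs : 0 ≤ s) (hst : s ≤ t)
    (ht : t * (‖V‖ / d) < √3 / 2) :
    ‖spectralProj (A + s • V) (thickening (d / 2) ω) -
        spectralProj (A + t • V) (thickening (d / 2) ω)‖ ≤
      (t - s) * (π / 2 * (‖V‖ / d * rotationRate (t * (‖V‖ / d)))) := by
  have hsw : 0 ≤ s * (‖V‖ / d) := by positivity
  have hstw : s * (‖V‖ / d) ≤ t * (‖V‖ / d) := by gcongr
  have hshift := spectralShift_le_spectralShift hd.le hsw hstw
  have hgap_le : d * (rotationRate (t * (‖V‖ / d)))⁻¹ ≤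
      d - spectralShift d (s * (‖V‖ / d)) - spectralShift d (t * (‖V‖ / d)) := by
    rw [← sub_two_mul_spectralShift]
    linarith
  have hrate := rotationRate_pos (hsw.trans hstw) ht
  have hnorm : ‖A + s • V - (A + t • V)‖ = (t - s) * ‖V‖ := by
    rw [add_sub_add_left_eq_sub, ← sub_smul, norm_smul, Real.norm_eq_abs, abs_sub_comm,
      abs_of_nonneg (sub_nonneg.2 hst)]
  calc _ ≤ π / 2 * (‖A + s • V - (A + t • V)‖ /
        (d - spectralShift d (s * (‖V‖ / d)) - spectralShift d (t * (‖V‖ / d)))) :=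
        hgap.norm_spectralProj_thickening_sub_le hω (hA.add (.smul (.all s) hV))
          (hA.add (.smul (.all t) hV)) (spectralShift_nonneg hd.le _)
          (spectralShift_lt_half hd hsw (hstw.trans_lt ht)) (spectralShift_nonneg hd.le _)
          (spectralShift_lt_half hd (hsw.trans hstw) ht)
          (hgap.spectrum_add_smul_subset hd hA hV hoff s)
          (hgap.spectrum_add_smul_subset hd hA hV hoff t)
    _ ≤ π / 2 * ((t - s) * ‖V‖ / (d * (rotationRate (t * (‖V‖ / d)))⁻¹)) := by
        rw [hnorm]
        have := sub_nonneg.2 hst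
        gcongr
    _ = _ := by field_simp

theorem HasSpectralGap.arcsin_norm_spectralProj_sub_le (hgap : HasSpectralGap A ω d) (hd : 0 < d)
    (hω : ω ⊆ spectrum ℝ A) (hA : IsSelfAdjoint A) (hV : IsSelfAdjoint V)
    (hoff : IsOffDiagonal (spectralProj A ω) V) (hVd : ‖V‖ / d < √3 / 2) :
    arcsin ‖spectralProj A ω - spectralProj (A + V) (thickening (d / 2) ω)‖ ≤
      π / 2 * ∫ τ in (0 : ℝ)..(‖V‖ / d), rotationRate τ := by
  set w := ‖V‖ / d
  have hw₀ : 0 ≤ w := by positivity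
  have hmem : ∀ t ∈ Icc (0 : ℝ) 1, t * w ∈ Ico 0 (√3 / 2) := fun t ht =>
    ⟨mul_nonneg ht.1 hw₀, (mul_le_of_le_one_left hw₀ ht.2).trans_lt hVd⟩
  set E : ℝ → H →L[ℂ] H := fun t => spectralProj (A + t • V) (thickening (d / 2) ω) with hE
  have hE₀ : E 0 = spectralProj A ω := by
    simp only [hE, zero_smul, add_zero, hgap.spectralProj_thickening hd hω]
  have hE₁ : E 1 = spectralProj (A + V) (thickening (d / 2) ω) := by
    simp only [hE, one_smul]
  have hEproj : ∀ t ∈ Icc (0 : ℝ) 1, IsStarProjection (E t) := fun t ht =>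
    isStarProjection_spectralProj <| hgap.splitsSpectrum_thickening hω
      (spectralShift_nonneg hd.le _) (spectralShift_lt_half hd (hmem t ht).1 (hmem t ht).2)
      (hgap.spectrum_add_smul_subset hd hA hV hoff t)
  have hrate : ContinuousOn (fun t => π / 2 * (w * rotationRate (t * w))) (Icc 0 1) :=
    continuousOn_const.mul <| continuousOn_const.mul <|
      continuousOn_rotationRate.comp (by fun_prop) hmem
  have hle := sub_le_integral_of_abs_sub_le_arcsin (f := fun t => arcsin ‖E 0 - E t‖) zero_le_one
    hrate fun s hs t ht hst =>
      (abs_arcsin_norm_sub_sub_arcsin_norm_sub_le (hEproj 0 (by simp)) (hEproj s hs)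
        (hEproj t ht)).trans <| monotone_arcsin <|
          hgap.norm_spectralProj_add_smul_sub_le hd hω hA hV hoff hs.1 hst (hmem t ht).2
  rw [intervalIntegral.integral_const_mul, intervalIntegral.integral_const_mul,
    intervalIntegral.mul_integral_comp_mul_right, zero_mul, one_mul, sub_self, norm_zero,
    arcsin_zero, sub_zero, hE₀, hE₁] at hle
  exact hle

theorem subspace_perturbation_offdiagonal_general (hA : IsSelfAdjoint A) (hV : IsSelfAdjoint V)
    (hω : ω ⊆ spectrum ℝ A) (hgap : HasSpectralGap A ω d) (hd : 0 < d)
    (hoff : IsOffDiagonal (spectralProj A ω) V) (hc : c < √3 / 2)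
    (hcroot : ∫ τ in (0 : ℝ)..c, rotationRate τ = 1) (hVc : ‖V‖ < c * d) :
    ‖spectralProj A ω - spectralProj (A + V) (thickening (d / 2) ω)‖ ≤
        sin (π / 2 * ∫ τ in (0 : ℝ)..(‖V‖ / d), rotationRate τ) ∧
      sin (π / 2 * ∫ τ in (0 : ℝ)..(‖V‖ / d), rotationRate τ) < 1 := by
  have hVdc : ‖V‖ / d < c := (div_lt_iff₀ hd).2 hVc
  have hlt : π / 2 * ∫ τ in (0 : ℝ)..(‖V‖ / d), rotationRate τ < π / 2 :=
    mul_lt_of_lt_one_right (by positivity)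
      (hcroot ▸ integral_rotationRate_lt_integral (by positivity) hVdc hc)
  have hle := hgap.arcsin_norm_spectralProj_sub_le hd hω hA hV hoff (hVdc.trans hc)
  have hneg : -(π / 2) < π / 2 * ∫ τ in (0 : ℝ)..(‖V‖ / d), rotationRate τ :=
    (neg_neg_of_pos (by positivity)).trans_le ((arcsin_nonneg.2 (norm_nonneg _)).trans hle)
  refine ⟨(arcsin_le_iff_le_sin' ⟨hneg.le, hlt⟩).1 hle, ?_⟩
  rw [← sin_pi_div_two]
  exact sin_lt_sin_of_lt_of_le_pi_div_two hneg.le le_rfl hlt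

end SubspacePerturbation

/-- Let `A, V` be bounded self-adjoint operators, `spec(A) = ω ∪ Ω` with
`d := dist(ω,Ω) > 0`, `P` the spectral projection of `A` associated with `ω`, and let `V` be
off-diagonal with respect to `H = Ran P ⊕ ker P`. Let `c⋆` be the unique positive root of
`∫_0^{c⋆} (2 − √(1+4τ²))⁻¹ dτ = 1` (one has `c⋆ < √3/2`). If `‖V‖ < c⋆·d` then, with `Q` the
spectral projection of `A + V` associated with the part of its spectrum in `O_{d/2}(ω)`,
`‖P − Q‖ ≤ sin((π/2)·∫_0^{‖V‖/d} (2 − √(1+4τ²))⁻¹ dτ) < 1`. -/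
theorem subspace_perturbation_offdiagonal {H : Type*} [NormedAddCommGroup H]
    [InnerProductSpace ℂ H] [CompleteSpace H] [TopologicalSpace.SeparableSpace H]
    (A V : H →L[ℂ] H) (hA : IsSelfAdjoint A) (hV : IsSelfAdjoint V)
    (ω Ω : Set ℝ) (hω : ω.Nonempty) (hΩ : Ω.Nonempty)
    (hωc : IsClosed ω) (hΩc : IsClosed Ω)
    (hspec : spectrum ℝ A = ω ∪ Ω)
    (d : ℝ) (hd : d = setDist ω Ω) (hdpos : 0 < d)
    (hoff₁ : spectralProj A ω * V * spectralProj A ω = 0)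
    (hoff₂ : (1 - spectralProj A ω) * V * (1 - spectralProj A ω) = 0)
    (c : ℝ) (hc : 0 < c) (hc' : c < Real.sqrt 3 / 2)
    (hcroot : (∫ τ in (0:ℝ)..c, (2 - Real.sqrt (1 + 4 * τ ^ 2))⁻¹) = 1)
    (hVn : ‖V‖ < c * d) :
    ‖spectralProj A ω - spectralProj (A + V) (Metric.thickening (d / 2) ω)‖ ≤
        Real.sin ((Real.pi / 2) *
          ∫ τ in (0:ℝ)..(‖V‖ / d), (2 - Real.sqrt (1 + 4 * τ ^ 2))⁻¹) ∧
      Real.sin ((Real.pi / 2) *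
          ∫ τ in (0:ℝ)..(‖V‖ / d), (2 - Real.sqrt (1 + 4 * τ ^ 2))⁻¹) < 1 := by
  subst hd
  exact subspace_perturbation_offdiagonal_general hA hV (hspec ▸ Set.subset_union_left)
    (hasSpectralGap_setDist hspec) hdpos ⟨hoff₁, hoff₂⟩ hc' hcroot hVn
end

section
/- Let I ⊂ ℝ be an interval and let t ↦ B_t be a C¹-smooth (in operator norm) path of bounded self-adjoint operators on H. Assume that for each t ∈ I there are nonempty closed sets ω_t, Ω_t ⊂ ℝ with spectrum(B_t) = ω_t ∪ Ω_t and dist(ω_t, Ω_t) > 0, and that the families {ω_t}_{t∈I} and {Ω_t}_{t∈I} are upper semicontinuous on I. Let P_t denote the spectral projection of B_t associated with ω_t. Then the path I ∋ t ↦ P_t is C¹-smooth in operator norm. -/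
open ContinuousLinearMap

/-!
Fix `t` and disjoint open sets `U ⊇ ω_t`, `V ⊇ Ω_t`. By upper semicontinuity `P_s = 1_U(B_s)` for
`s` near `t`. A real polynomial `p`, positive on the part of the spectrum of `B_t` in `U` and
negative on the part in `V`, has the same signs on nearby spectra, so `P_s` is the positive
spectral projection `1_{(0, ∞)}(a)` of the invertible self-adjoint element `a = p(B_s)`. Since
`1_{(0, ∞)}(x) = (|x| + x) / (2 |x|)` for `x ≠ 0`, everything reduces to smoothness of `a ↦ |a|` at
invertible `a`. There `|a| ^ 2 = a* a`, and squaring is a local diffeomorphism at the strictly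
positive element `r = |a|`: its derivative `h ↦ r h + h r` is invertible, because `‖c - r‖ < c` for
large scalars `c`, so that it differs from `2c` by an operator of norm less than `2c`.
-/

open Filter Metric Set
open scoped Polynomial Topology

section BanachAlgebra

variable {A : Type*} [NormedRing A] [NormedAlgebra ℝ A] {n : WithTop ℕ∞}

lemma contDiff_polynomial_aeval (p : ℝ[X]) :
    ContDiff ℝ n (fun a : A ↦ Polynomial.aeval a p) := by
  simp only [Polynomial.aeval_eq_sum_range]
  exact ContDiff.sum fun i _ ↦ (contDiff_id.pow i).const_smul _

variable [CompleteSpace A]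

lemma isUnit_mul_add_mul_flip_of_norm_algebraMap_sub_lt {r : A} {c : ℝ}
    (hr : ‖algebraMap ℝ A c - r‖ < c) : IsUnit (mul ℝ A r + (mul ℝ A).flip r) := by
  set k := algebraMap ℝ A c - r
  have hsum : mul ℝ A r + (mul ℝ A).flip r =
      algebraMap ℝ (A →L[ℝ] A) (2 * c) - (mul ℝ A k + (mul ℝ A).flip k) := by
    ext h
    simp only [k, Algebra.algebraMap_eq_smul_one, two_mul, add_smul, map_sub, map_smul, add_apply,
      sub_apply, smul_apply, flip_apply, mul_apply', one_apply_eq_self, one_mul, mul_one]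
    abel
  have hnorm : ‖mul ℝ A k + (mul ℝ A).flip k‖ ≤ 2 * ‖k‖ := by
    refine opNorm_le_bound _ (by positivity) fun h ↦ ?_
    calc ‖k * h + h * k‖ ≤ ‖k‖ * ‖h‖ + ‖h‖ * ‖k‖ :=
          norm_add_le_of_le (norm_mul_le k h) (norm_mul_le h k)
      _ = 2 * ‖k‖ * ‖h‖ := by ring
  rw [hsum]
  refine spectrum.mem_resolventSet_of_norm_lt_mul ?_
  calc ‖mul ℝ A k + (mul ℝ A).flip k‖ * ‖(1 : A →L[ℝ] A)‖ ≤ 2 * ‖k‖ * 1 :=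
        mul_le_mul hnorm norm_id_le (norm_nonneg _) (by positivity)
    _ < 2 * c := by linarith
    _ ≤ ‖2 * c‖ := Real.le_norm_self _

lemma exists_contDiffAt_leftInverse_mul_self {r : A}
    (hr : IsUnit (mul ℝ A r + (mul ℝ A).flip r)) :
    ∃ g : A → A, ContDiffAt ℝ n g (r * r) ∧ ∀ᶠ x in 𝓝 r, g (x * x) = x := by
  obtain ⟨u, hu⟩ := hr
  have hderiv : HasFDerivAt (fun x : A ↦ x * x)
      (ContinuousLinearEquiv.ofUnit u : A →L[ℝ] A) r := by
    refine ((hasFDerivAt_id (𝕜 := ℝ) r).mul' (hasFDerivAt_id r)).congr_fderiv ?_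
    ext h
    exact congr($hu.symm h)
  have hsmooth : ContDiffAt ℝ ⊤ (fun x : A ↦ x * x) r := (contDiff_id.mul contDiff_id).contDiffAt
  exact ⟨hsmooth.localInverse hderiv WithTop.top_ne_zero,
    (hsmooth.to_localInverse hderiv WithTop.top_ne_zero).of_le le_top,
    (hsmooth.hasStrictFDerivAt' hderiv WithTop.top_ne_zero).eventually_left_inverse⟩

end BanachAlgebra

lemma exists_polynomial_pos_neg {K L : Set ℝ} (hK : IsCompact K) (hL : IsCompact L)
    (hKL : Disjoint K L) :
    ∃ p : ℝ[X], (∀ x ∈ K, 0 < p.eval x) ∧ ∀ x ∈ L, p.eval x < 0 := by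
  obtain ⟨f, hfL, hfK, -⟩ :=
    exists_continuous_zero_one_of_isClosed hL.isClosed hK.isClosed hKL.symm
  obtain ⟨R, hR⟩ := (hK.union hL).isBounded.subset_closedBall 0
  rw [Real.closedBall_eq_Icc] at hR
  obtain ⟨p, hp⟩ := exists_polynomial_near_of_continuousOn _ _ (fun x ↦ 2 * f x - 1)
    (by fun_prop) 1 one_pos
  refine ⟨p, fun x hx ↦ ?_, fun x hx ↦ ?_⟩
  · have hpx := abs_lt.1 (hp x (hR (.inl hx)))
    simp only [hfK hx, Pi.one_apply] at hpx
    linarith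
  · have hpx := abs_lt.1 (hp x (hR (.inr hx)))
    simp only [hfL hx, Pi.zero_apply] at hpx
    linarith

lemma exists_polynomial_pos_neg_of_subset_union {K U V : Set ℝ} (hK : IsCompact K) (hU : IsOpen U)
    (hV : IsOpen V) (hUV : Disjoint U V) (hKUV : K ⊆ U ∪ V) :
    ∃ (p : ℝ[X]) (W : Set ℝ), IsOpen W ∧ K ⊆ W ∧
      (∀ x ∈ W ∩ U, 0 < p.eval x) ∧ ∀ x ∈ W \ U, p.eval x < 0 := by
  have hdisj : Disjoint (K \ V) (K \ U) :=
    disjoint_left.2 fun x hxV hxU ↦ (hKUV hxV.1).elim hxU.2 hxV.2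
  obtain ⟨p, hpos, hneg⟩ := exists_polynomial_pos_neg (hK.diff hV) (hK.diff hU) hdisj
  refine ⟨p, U ∩ {x | 0 < p.eval x} ∪ V ∩ {x | p.eval x < 0}, ?_, fun x hx ↦ ?_, ?_, ?_⟩
  · exact (hU.inter (isOpen_lt continuous_const p.continuous)).union
      (hV.inter (isOpen_lt p.continuous continuous_const))
  · exact (hKUV hx).imp (fun hxU ↦ ⟨hxU, hpos x ⟨hx, disjoint_left.1 hUV hxU⟩⟩)
      fun hxV ↦ ⟨hxV, hneg x ⟨hx, disjoint_right.1 hUV hxV⟩⟩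
  · rintro x ⟨hx | hx, hxU⟩
    exacts [hx.2, (disjoint_left.1 hUV hxU hx.1).elim]
  · rintro x ⟨hx | hx, hxU⟩
    exacts [(hxU hx.1).elim, hx.2]

lemma continuousOn_indicator_Ioi_zero :
    ContinuousOn ((Ioi 0).indicator fun _ ↦ (1 : ℝ)) ({0}ᶜ : Set ℝ) := by
  have hpos : ContinuousOn ((Ioi 0).indicator fun _ ↦ (1 : ℝ)) (Ioi 0 : Set ℝ) :=
    continuousOn_const.congr (eqOn_indicator ..)
  have hneg : ContinuousOn ((Ioi 0).indicator fun _ ↦ (1 : ℝ)) (Iio 0 : Set ℝ) :=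
    continuousOn_const.congr fun x hx ↦ indicator_of_notMem (notMem_Ioi.2 (le_of_lt hx)) _
  rw [← Iio_union_Ioi]
  exact hneg.union_of_isOpen hpos isOpen_Iio isOpen_Ioi

lemma eqOn_indicator_of_disjoint {α β : Type*} [Zero β] {s t U V : Set α} (f : α → β) (hs : s ⊆ U)
    (ht : t ⊆ V) (hUV : Disjoint U V) : EqOn (s.indicator f) (U.indicator f) (s ∪ t) := by
  rintro x (hx | hx)
  · rw [indicator_of_mem hx, indicator_of_mem (hs hx)]
  · have hxU : x ∉ U := disjoint_right.1 hUV (ht hx)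
    rw [indicator_of_notMem (mt (@hs x) hxU), indicator_of_notMem hxU]

lemma disjoint_of_setDist_pos {s t : Set ℝ} (h : 0 < setDist s t) : Disjoint s t := by
  refine disjoint_left.2 fun x hs ht ↦ h.not_ge ?_
  have hbdd : BddBelow (image2 dist s t) :=
    ⟨0, forall_mem_image2.2 fun _ _ _ _ ↦ dist_nonneg⟩
  exact (csInf_le hbdd (mem_image2_of_mem hs ht)).trans_eq (dist_self x)

lemma UpperSemicontinuousFamilyOn.upperHemicontinuousOn {ω : ℝ → Set ℝ} {I : Set ℝ}
    (h : UpperSemicontinuousFamilyOn ω I) (hω : ∀ t ∈ I, IsCompact (ω t)) :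
    UpperHemicontinuousOn ω I := by
  refine .of_forall_isOpen fun t ht U hU hsub ↦ ?_
  obtain ⟨ε, hε, hεU⟩ := (hω t ht).exists_thickening_subset_open hU hsub
  obtain ⟨δ, hδ, hδω⟩ := h t ht ε hε
  filter_upwards [self_mem_nhdsWithin, nhdsWithin_le_nhds (ball_mem_nhds t hδ)] with s hs hst
  exact (hδω s hs hst).trans hεU

section CStarAlgebra

variable {A : Type*} [CStarAlgebra A] {n : WithTop ℕ∞} {a : A}

section Abs

variable [PartialOrder A] [StarOrderedRing A]

lemma isUnit_mul_add_mul_flip_of_isStrictlyPositive (ha : IsStrictlyPositive a) :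
    IsUnit (mul ℝ A a + (mul ℝ A).flip a) := by
  set c := ‖a‖ * ‖(1 : A)‖ + 1
  have hc : 0 < c := by positivity
  have hsub : algebraMap ℝ A c - a = cfc (fun x ↦ c - x) a := by
    rw [cfc_sub .., cfc_const c a, cfc_id' ℝ a]
  refine isUnit_mul_add_mul_flip_of_norm_algebraMap_sub_lt (c := c) ?_
  rw [hsub]
  refine norm_cfc_lt hc fun x hx ↦ ?_
  have hpos : 0 < x := ha.spectrum_pos hx
  have hle : x ≤ ‖a‖ * ‖(1 : A)‖ :=
    (Real.le_norm_self x).trans (spectrum.norm_le_norm_mul_of_mem hx)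
  rw [Real.norm_eq_abs, abs_lt]
  constructor <;> linarith

lemma isStrictlyPositive_cfcAbs (ha : IsUnit a) : IsStrictlyPositive (CFC.abs a) :=
  .sqrt _ ((ha.star.mul ha).isStrictlyPositive (star_mul_self_nonneg a))

lemma contDiffAt_cfcAbs (ha : IsUnit a) : ContDiffAt ℝ n CFC.abs a := by
  have hpos : IsStrictlyPositive (CFC.abs a) := isStrictlyPositive_cfcAbs ha
  have hunit := isUnit_mul_add_mul_flip_of_isStrictlyPositive hpos
  obtain ⟨g, hg, hgsq⟩ := exists_contDiffAt_leftInverse_mul_self (n := n) hunit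
  have habs : CFC.abs =ᶠ[𝓝 a] g ∘ fun x ↦ star x * x := by
    filter_upwards [CFC.continuous_abs.continuousAt.eventually hgsq] with x hx
    rw [Function.comp_apply, ← CFC.abs_mul_abs, hx]
  have hstar : ContDiffAt ℝ n (fun x : A ↦ star x * x) a :=
    ((starL' ℝ : A ≃L[ℝ] A).contDiff.mul contDiff_id).contDiffAt
  rw [CFC.abs_mul_abs] at hg
  exact (ContDiffAt.comp (f := fun x ↦ star x * x) a hg hstar).congr_of_eventuallyEq habs

lemma cfc_indicator_Ioi_zero_mul_cfcAbs (ha : IsSelfAdjoint a) (hu : IsUnit a) :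
    cfc ((Ioi 0).indicator fun _ ↦ (1 : ℝ)) a * CFC.abs a = (1 / 2 : ℝ) • (CFC.abs a + a) := by
  have hspec : spectrum ℝ a ⊆ {0}ᶜ :=
    subset_compl_singleton_iff.2 (spectrum.zero_notMem ℝ hu)
  have habs : CFC.abs a = cfc (fun x : ℝ ↦ |x|) a := CFC.abs_eq_cfc_norm a ha
  have hadd : (1 / 2 : ℝ) • (CFC.abs a + a) = cfc (fun x : ℝ ↦ 1 / 2 * (|x| + x)) a := by
    rw [cfc_const_mul (1 / 2 : ℝ) (fun x ↦ |x| + x) a, cfc_add a (fun x : ℝ ↦ |x|) fun x ↦ x,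
      cfc_id' ℝ a, habs]
  rw [hadd, habs, ← cfc_mul _ _ a (continuousOn_indicator_Ioi_zero.mono hspec)]
  refine cfc_congr fun x _ ↦ ?_
  rcases lt_or_ge 0 x with hx | hx
  · simp only [indicator_of_mem (mem_Ioi.2 hx), abs_of_pos hx]
    ring
  · simp only [indicator_of_notMem (notMem_Ioi.2 hx), abs_of_nonpos hx]
    ring

end Abs

lemma contDiffWithinAt_cfc_indicator_Ioi_zero (ha : IsSelfAdjoint a) (hu : IsUnit a) :
    ContDiffWithinAt ℝ n (cfc ((Ioi 0).indicator fun _ ↦ (1 : ℝ))) {x : A | IsSelfAdjoint x} a := by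
  let _ := CStarAlgebra.spectralOrder A
  let _ := CStarAlgebra.spectralOrderedRing A
  have hformula : cfc ((Ioi 0).indicator fun _ ↦ (1 : ℝ)) =ᶠ[𝓝[{x : A | IsSelfAdjoint x}] a]
      fun x ↦ (1 / 2 : ℝ) • (CFC.abs x + x) * Ring.inverse (CFC.abs x) := by
    filter_upwards [self_mem_nhdsWithin, nhdsWithin_le_nhds (Units.isOpen.mem_nhds hu)]
      with x hx hxu
    rw [← cfc_indicator_Ioi_zero_mul_cfcAbs hx hxu,
      Ring.mul_inverse_cancel_right _ _ (isStrictlyPositive_cfcAbs hxu).isUnit]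
  have habs : ContDiffAt ℝ n CFC.abs a := contDiffAt_cfcAbs hu
  have hinv : ContDiffAt ℝ n (fun x ↦ Ring.inverse (CFC.abs x)) a := by
    obtain ⟨u, h⟩ := (isStrictlyPositive_cfcAbs hu).isUnit
    exact ContDiffAt.comp a (h ▸ contDiffAt_ringInverse ℝ u) habs
  exact (((habs.add contDiffAt_id).const_smul _).mul hinv).contDiffWithinAt
    |>.congr_of_eventuallyEq_of_mem hformula ha

lemma cfc_indicator_eq_cfc_indicator_Ioi_zero_aeval {U : Set ℝ} {p : ℝ[X]} (ha : IsSelfAdjoint a)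
    (hpos : ∀ x ∈ spectrum ℝ a ∩ U, 0 < p.eval x) (hneg : ∀ x ∈ spectrum ℝ a \ U, p.eval x < 0) :
    cfc (U.indicator fun _ ↦ (1 : ℝ)) a =
      cfc ((Ioi 0).indicator fun _ ↦ (1 : ℝ)) (Polynomial.aeval a p) := by
  have hne : p.eval '' spectrum ℝ a ⊆ {0}ᶜ := by
    rintro _ ⟨x, hx, rfl⟩
    by_cases hxU : x ∈ U
    exacts [(hpos x ⟨hx, hxU⟩).ne', (hneg x ⟨hx, hxU⟩).ne]
  rw [← cfc_comp_polynomial p _ a (continuousOn_indicator_Ioi_zero.mono hne)]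
  refine cfc_congr fun x hx ↦ ?_
  by_cases hxU : x ∈ U
  · rw [indicator_of_mem hxU, indicator_of_mem (mem_Ioi.2 (hpos x ⟨hx, hxU⟩))]
  · rw [indicator_of_notMem hxU, indicator_of_notMem (notMem_Ioi.2 (hneg x ⟨hx, hxU⟩).le)]

lemma isSelfAdjoint_polynomial_aeval (ha : IsSelfAdjoint a) (p : ℝ[X]) :
    IsSelfAdjoint (Polynomial.aeval a p) := by
  rw [← cfc_polynomial p a]
  exact cfc_predicate _ a

lemma isUnit_polynomial_aeval {p : ℝ[X]} (ha : IsSelfAdjoint a)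
    (hp : ∀ x ∈ spectrum ℝ a, p.eval x ≠ 0) : IsUnit (Polynomial.aeval a p) := by
  rw [← cfc_polynomial p a]
  exact (isUnit_cfc_iff _ a).2 hp

lemma contDiffWithinAt_cfc_indicator {U V : Set ℝ} (hU : IsOpen U) (hV : IsOpen V)
    (hUV : Disjoint U V) (ha : IsSelfAdjoint a) (hspec : spectrum ℝ a ⊆ U ∪ V) :
    ContDiffWithinAt ℝ n (cfc (U.indicator fun _ ↦ (1 : ℝ))) {x : A | IsSelfAdjoint x} a := by
  obtain ⟨p, W, hW, haW, hpos, hneg⟩ :=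
    exists_polynomial_pos_neg_of_subset_union (spectrum.isCompact a) hU hV hUV hspec
  have hevent : ∀ᶠ b in 𝓝 a, spectrum ℝ b ⊆ W :=
    (upperHemicontinuous_spectrum ℝ A).forall_isOpen a W hW haW
  have hcongr : cfc (U.indicator fun _ ↦ (1 : ℝ)) =ᶠ[𝓝[{x : A | IsSelfAdjoint x}] a]
      fun b ↦ cfc ((Ioi 0).indicator fun _ ↦ (1 : ℝ)) (Polynomial.aeval b p) := by
    filter_upwards [self_mem_nhdsWithin, nhdsWithin_le_nhds hevent] with b hb hbW
    exact cfc_indicator_eq_cfc_indicator_Ioi_zero_aeval hb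
      (fun x hx ↦ hpos x ⟨hbW hx.1, hx.2⟩) fun x hx ↦ hneg x ⟨hbW hx.1, hx.2⟩
  have hunit : IsUnit (Polynomial.aeval a p) := isUnit_polynomial_aeval ha fun x hx ↦ by
    by_cases hxU : x ∈ U
    exacts [(hpos x ⟨haW hx, hxU⟩).ne', (hneg x ⟨haW hx, hxU⟩).ne]
  have hproj := contDiffWithinAt_cfc_indicator_Ioi_zero (n := n)
    (isSelfAdjoint_polynomial_aeval ha p) hunit
  exact (hproj.comp a (contDiff_polynomial_aeval p).contDiffWithinAt
    fun b hb ↦ isSelfAdjoint_polynomial_aeval hb p).congr_of_eventuallyEq_of_mem hcongr ha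

end CStarAlgebra

theorem spectralProj_contDiffOn_general {A : Type*} [CStarAlgebra A] {E : Type*}
    [NormedAddCommGroup E] [NormedSpace ℝ E] {n : WithTop ℕ∞} {S : Set E} {B : E → A}
    (hBsa : ∀ t ∈ S, IsSelfAdjoint (B t)) (hB : ContDiffOn ℝ n B S) {ω Ω : E → Set ℝ}
    (hspec : ∀ t ∈ S, spectrum ℝ (B t) ⊆ ω t ∪ Ω t) (hsep : ∀ t ∈ S, SeparatedNhds (ω t) (Ω t))
    (hω : UpperHemicontinuousOn ω S) (hΩ : UpperHemicontinuousOn Ω S) :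
    ContDiffOn ℝ n (fun t ↦ cfc ((ω t).indicator fun _ ↦ (1 : ℝ)) (B t)) S := by
  intro t ht
  obtain ⟨U, V, hU, hV, hωU, hΩV, hUV⟩ := hsep t ht
  have hsmooth : ContDiffWithinAt ℝ n (fun s ↦ cfc (U.indicator fun _ ↦ (1 : ℝ)) (B s)) S t :=
    (contDiffWithinAt_cfc_indicator hU hV hUV (hBsa t ht)
      ((hspec t ht).trans (union_subset_union hωU hΩV))).comp t (hB t ht) hBsa
  refine hsmooth.congr_of_eventuallyEq_of_mem ?_ ht
  filter_upwards [hω.forall_isOpen t ht U hU hωU, hΩ.forall_isOpen t ht V hV hΩV,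
    self_mem_nhdsWithin] with s hsU hsV hs
  exact cfc_congr ((eqOn_indicator_of_disjoint _ hsU hsV hUV).mono (hspec s hs))

/-- Let `t ↦ B_t` be a `C¹`-smooth path of bounded self-adjoint operators on
an interval `I`, whose spectra split as `ω_t ∪ Ω_t` into nonempty closed sets at positive
distance, depending upper semicontinuously on `t`. Then the path of the corresponding spectral
projections `t ↦ P_t` is `C¹`-smooth in operator norm on `I`. -/
theorem spectralProj_contDiffOn {H : Type*} [NormedAddCommGroup H]
    [InnerProductSpace ℂ H] [CompleteSpace H] [TopologicalSpace.SeparableSpace H]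
    (I : Set ℝ) (hI : I.OrdConnected)
    (B : ℝ → (H →L[ℂ] H)) (hBsa : ∀ t ∈ I, IsSelfAdjoint (B t))
    (hB : ContDiffOn ℝ 1 B I)
    (ω Ω : ℝ → Set ℝ)
    (hne : ∀ t ∈ I, (ω t).Nonempty ∧ (Ω t).Nonempty)
    (hcl : ∀ t ∈ I, IsClosed (ω t) ∧ IsClosed (Ω t))
    (hspec : ∀ t ∈ I, spectrum ℝ (B t) = ω t ∪ Ω t)
    (hdist : ∀ t ∈ I, 0 < setDist (ω t) (Ω t))
    (huscω : UpperSemicontinuousFamilyOn ω I)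
    (huscΩ : UpperSemicontinuousFamilyOn Ω I) :
    ContDiffOn ℝ 1 (fun t => spectralProj (B t) (ω t)) I := by
  have hω : ∀ t ∈ I, IsCompact (ω t) := fun t ht ↦
    (spectrum.isCompact (𝕜 := ℝ) (B t)).of_isClosed_subset (hcl t ht).1
      (subset_union_left.trans (hspec t ht).ge)
  have hΩ : ∀ t ∈ I, IsCompact (Ω t) := fun t ht ↦
    (spectrum.isCompact (𝕜 := ℝ) (B t)).of_isClosed_subset (hcl t ht).2
      (subset_union_right.trans (hspec t ht).ge)
  exact spectralProj_contDiffOn_general hBsa hB (fun t ht ↦ (hspec t ht).le)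
    (fun t ht ↦ .of_isCompact_isCompact (hω t ht) (hΩ t ht) (disjoint_of_setDist_pos (hdist t ht)))
    (huscω.upperHemicontinuousOn hω) (huscΩ.upperHemicontinuousOn hΩ)
end

section
/- For every p ∈ (0,1), the regularized discrete Hilbert transform H_p, defined on ℓ²(ℤ, ℂ) by (H_p a)_m = Σ_{n∈ℤ} a_n / (m − n + p), is a well-defined bounded linear operator, and its operator norm equals π / sin(π p). -/
/-!
Fourier series turn convolution by `k` on `ℓ²(ℤ)` into multiplication by the function on the circle
whose Fourier coefficients are `k`. For `k j = 1 / (j + p)` this function is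
`x ↦ π / sin (π p) * exp (π i p (1 - 2 x))` on `(0, 1]`, which for real `p` has constant modulus
`π / |sin (π p)|`, so the convolution operator is that constant times an isometry.
-/

open AddCircle MeasureTheory
open scoped ENNReal Real

theorem norm_holder_lsmul_of_norm_ae_eq {α 𝕜 E : Type*} [MeasurableSpace α] {μ : Measure α}
    [NontriviallyNormedField 𝕜] [NormedAddCommGroup E] [NormedSpace 𝕜 E] {q : ℝ≥0∞} [Fact (1 ≤ q)]
    {g : Lp 𝕜 ∞ μ} {c : 𝕜} (hg : ∀ᵐ x ∂μ, ‖g x‖ = ‖c‖) (f : Lp E q μ) :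
    ‖(ContinuousLinearMap.lsmul 𝕜 𝕜).holder q g f‖ = ‖c‖ * ‖f‖ := by
  rw [← norm_smul, Lp.norm_def, Lp.norm_def]
  congr 1
  apply eLpNorm_congr_norm_ae
  filter_upwards [hg, ContinuousLinearMap.coeFn_holder (r := q) (.lsmul 𝕜 𝕜) g f,
    Lp.coeFn_smul c f] with x hgx hgf hcf
  rw [hgf, hcf, ContinuousLinearMap.lsmul_apply, Pi.smul_apply, norm_smul, norm_smul, hgx]

section LaurentOperator

variable {T : ℝ} [Fact (0 < T)]

theorem fourierCoeff_mul_fourier (g : AddCircle T → ℂ) (m n : ℤ) :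
    fourierCoeff (fun x ↦ g x * fourier n x) m = fourierCoeff g (m - n) := by
  refine integral_congr_ae (.of_forall fun x ↦ ?_)
  simp only [smul_eq_mul]
  rw [neg_sub, sub_eq_neg_add, fourier_add]
  ring

/-- The Laurent operator with symbol `g ∈ L^∞` of the circle: multiplication by `g` on `L²`,
transported to `ℓ²(ℤ)` by the Fourier basis. It is convolution with the Fourier coefficients
of `g`. -/
noncomputable def laurentOperator (g : Lp ℂ ∞ (haarAddCircle (T := T))) :
    lp (fun _ : ℤ ↦ ℂ) 2 →L[ℂ] lp (fun _ : ℤ ↦ ℂ) 2 :=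
  fourierBasis.repr.toLinearIsometry.toContinuousLinearMap ∘L
    (ContinuousLinearMap.lsmul ℂ ℂ).holderL haarAddCircle ∞ 2 2 g ∘L
      fourierBasis.repr.symm.toLinearIsometry.toContinuousLinearMap

variable (g : Lp ℂ ∞ (haarAddCircle (T := T)))

theorem laurentOperator_apply (a : lp (fun _ : ℤ ↦ ℂ) 2) :
    laurentOperator g a = fourierBasis.repr
      ((ContinuousLinearMap.lsmul ℂ ℂ).holder 2 g (fourierBasis.repr.symm a)) :=
  rfl

theorem laurentOperator_single_one_apply (m n : ℤ) :
    laurentOperator g (lp.single 2 n 1) m = fourierCoeff g (m - n) := by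
  rw [laurentOperator_apply, fourierBasis_repr, HilbertBasis.repr_symm_single, coe_fourierBasis,
    ← fourierCoeff_mul_fourier]
  refine congrFun (fourierCoeff_congr_ae ?_) m
  filter_upwards [ContinuousLinearMap.coeFn_holder (r := 2) (.lsmul ℂ ℂ) g (fourierLp 2 n),
    coeFn_fourierLp 2 n] with x hgx hx
  rw [hgx, hx, ContinuousLinearMap.lsmul_apply, smul_eq_mul]

theorem hasSum_laurentOperator (a : lp (fun _ : ℤ ↦ ℂ) 2) (m : ℤ) :
    HasSum (fun n ↦ a n * fourierCoeff g (m - n)) (laurentOperator g a m) := by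
  have hsum := (lp.hasSum_single ENNReal.ofNat_ne_top a).mapL
    (lp.evalCLM ℂ (fun _ : ℤ ↦ ℂ) 2 m ∘L laurentOperator g)
  have hterm (n : ℤ) : laurentOperator g (lp.single 2 n (a n)) m =
      a n * fourierCoeff g (m - n) := by
    rw [← laurentOperator_single_one_apply, ← smul_eq_mul, ← Pi.smul_apply, ← lp.coeFn_smul,
      ← map_smul, ← lp.single_smul, smul_eq_mul, mul_one]
  exact hsum.congr_fun fun n ↦ (hterm n).symm

variable {g} {c : ℂ}

theorem norm_laurentOperator_apply (hg : ∀ᵐ x ∂haarAddCircle, ‖g x‖ = ‖c‖)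
    (a : lp (fun _ : ℤ ↦ ℂ) 2) :
    ‖laurentOperator g a‖ = ‖c‖ * ‖a‖ := by
  rw [laurentOperator_apply, LinearIsometryEquiv.norm_map, norm_holder_lsmul_of_norm_ae_eq hg,
    LinearIsometryEquiv.norm_map]

theorem norm_laurentOperator (hg : ∀ᵐ x ∂haarAddCircle, ‖g x‖ = ‖c‖) :
    ‖laurentOperator g‖ = ‖c‖ := by
  have : Nontrivial (lp (fun _ : ℤ ↦ ℂ) 2) :=
    nontrivial_of_ne (lp.single 2 0 1) 0 <| norm_ne_zero_iff.1 <| by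
      simp only [lp.norm_single two_pos, norm_one, ne_eq, one_ne_zero, not_false_eq_true]
  exact ContinuousLinearMap.homothety_norm _ (norm_laurentOperator_apply hg)

end LaurentOperator

section LiftIoc

variable {T : ℝ} [hT : Fact (0 < T)]

theorem memLp_liftIoc_of_continuousOn {f : ℝ → ℂ} {a : ℝ}
    (hf : ContinuousOn f (Set.Icc a (a + T))) (q : ℝ≥0∞) :
    MemLp (liftIoc T a f) q haarAddCircle := by
  obtain ⟨C, hC⟩ := isCompact_Icc.exists_bound_of_continuousOn hf
  have hmem : MemLp f q (volume.restrict (Set.Ioc a (a + T))) :=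
    .of_bound ((hf.mono Set.Ioc_subset_Icc_self).aestronglyMeasurable measurableSet_Ioc) C <|
      ae_restrict_of_forall_mem measurableSet_Ioc fun t ht ↦ hC t (Set.Ioc_subset_Icc_self ht)
  exact hmem.memLp_liftIoc.haarAddCircle

theorem fourierCoeff_liftIoc_exp {w : ℂ} {k : ℤ} (hw : w * T - 2 * π * Complex.I * k ≠ 0) :
    fourierCoeff (liftIoc T 0 fun x : ℝ ↦ Complex.exp (w * x)) k =
      (Complex.exp (w * T) - 1) / (w * T - 2 * π * Complex.I * k) := by
  have hT0 : (T : ℂ) ≠ 0 := Complex.ofReal_ne_zero.2 hT.out.ne'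
  set v : ℂ := w - 2 * π * Complex.I * k / T with hv
  have hvT : v * T = w * T - 2 * π * Complex.I * k := by
    rw [hv, sub_mul, div_mul_cancel₀ _ hT0]
  have hv0 : v ≠ 0 := left_ne_zero_of_mul (hvT ▸ hw)
  have hintegrand (x : ℝ) : fourier (-k) (x : AddCircle (0 + T - 0)) • Complex.exp (w * x) =
      Complex.exp (v * x) := by
    rw [fourier_coe_apply, smul_eq_mul, ← Complex.exp_add, hv]
    push_cast
    ring_nf
  have hperiod : Complex.exp (v * T) = Complex.exp (w * T) := by
    rw [hvT, Complex.exp_sub, mul_comm _ (k : ℂ), Complex.exp_int_mul_two_pi_mul_I, div_one]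
  rw [fourierCoeff_liftIoc_eq, fourierCoeffOn_eq_integral]
  simp_rw [hintegrand]
  rw [integral_exp_mul_complex hv0, zero_add, hperiod, ← hvT, Complex.ofReal_zero, mul_zero,
    Complex.exp_zero, sub_zero, Complex.real_smul]
  push_cast
  field_simp

end LiftIoc

/-- The symbol of the discrete Hilbert transform regularized by a non-integer `z`: the function on
`ℝ / ℤ` with Fourier coefficients `1 / (k + z)`, given by its values on the fundamental domain
`(0, 1]`. -/
noncomputable def discreteHilbertSymbol (z : ℂ) (x : UnitAddCircle) : ℂ :=
  π / Complex.sin (π * z) * Complex.exp (π * z * Complex.I) *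
    liftIoc 1 0 (fun t : ℝ ↦ Complex.exp (-(2 * π * z * Complex.I) * t)) x

theorem memLp_discreteHilbertSymbol (z : ℂ) (q : ℝ≥0∞) :
    MemLp (discreteHilbertSymbol z) q haarAddCircle :=
  (memLp_liftIoc_of_continuousOn (by fun_prop) q).const_mul _

theorem fourierCoeff_discreteHilbertSymbol {z : ℂ} (hz : z ∈ Complex.integerComplement) (k : ℤ) :
    fourierCoeff (discreteHilbertSymbol z) k = (k + z)⁻¹ := by
  have hsin : Complex.sin (π * z) ≠ 0 := sin_pi_mul_ne_zero hz
  have hkz : (k : ℂ) + z ≠ 0 := add_comm z k ▸ Complex.integerComplement_add_ne_zero hz k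
  have hπ : (π : ℂ) ≠ 0 := Complex.ofReal_ne_zero.2 Real.pi_ne_zero
  have hdenom : -(2 * π * z * Complex.I) * ((1 : ℝ) : ℂ) - 2 * π * Complex.I * k =
      -(2 * π * Complex.I * (k + z)) := by
    push_cast
    ring
  have hnum : Complex.exp (π * z * Complex.I) * (Complex.exp (-(2 * π * z * Complex.I)) - 1) =
      -(2 * Complex.I * Complex.sin (π * z)) := by
    have hexp : Complex.exp (π * z * Complex.I) * Complex.exp (-(2 * π * z * Complex.I)) =
        Complex.exp (-(π * z) * Complex.I) := by
      rw [← Complex.exp_add]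
      ring_nf
    linear_combination hexp + Complex.I * Complex.two_sin (π * z) +
      (Complex.exp (-(π * z) * Complex.I) - Complex.exp (π * z * Complex.I)) * Complex.I_sq
  unfold discreteHilbertSymbol
  rw [fourierCoeff.const_mul, fourierCoeff_liftIoc_exp, hdenom, Complex.ofReal_one, mul_one,
    mul_assoc, ← mul_div_assoc, hnum]
  · field_simp
  · rw [hdenom]
    simp [hπ, hkz]

theorem norm_discreteHilbertSymbol_ofReal (p : ℝ) (x : UnitAddCircle) :
    ‖discreteHilbertSymbol p x‖ = ‖(π / Complex.sin (π * p) : ℂ)‖ := by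
  have hphase : ‖Complex.exp (π * p * Complex.I)‖ = 1 := by
    rw [← Complex.ofReal_mul, Complex.norm_exp_ofReal_mul_I]
  have hlift : ‖liftIoc 1 0 (fun t : ℝ ↦ Complex.exp (-(2 * π * p * Complex.I) * t)) x‖ = 1 := by
    rw [← liftIoc_comp_apply (g := norm)]
    simp [liftIoc, Complex.norm_exp]
  rw [discreteHilbertSymbol, norm_mul, norm_mul, hphase, hlift, mul_one, mul_one]

theorem ofReal_mem_integerComplement_iff_sin_ne_zero {p : ℝ} :
    (p : ℂ) ∈ Complex.integerComplement ↔ Real.sin (π * p) ≠ 0 := by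
  rw [Complex.mem_integerComplement_iff, ne_eq, Real.sin_eq_zero_iff, not_iff_not]
  refine exists_congr fun n ↦ ?_
  rw [mul_comm π, mul_left_inj' Real.pi_ne_zero]
  norm_cast

theorem regularized_discrete_hilbert_transform_norm_general (p : ℝ)
    (hp : (p : ℂ) ∈ Complex.integerComplement) :
    (∀ (a : lp (fun _ : ℤ ↦ ℂ) 2) (m : ℤ),
      Summable fun n : ℤ ↦ a n / ((m : ℂ) - (n : ℂ) + (p : ℂ))) ∧
    ∃ T : lp (fun _ : ℤ ↦ ℂ) 2 →L[ℂ] lp (fun _ : ℤ ↦ ℂ) 2,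
      (∀ (a : lp (fun _ : ℤ ↦ ℂ) 2) (m : ℤ),
        T a m = ∑' n : ℤ, a n / ((m : ℂ) - (n : ℂ) + (p : ℂ))) ∧
      ‖T‖ = π / |Real.sin (π * p)| := by
  have hmem := memLp_discreteHilbertSymbol p ∞
  have hsum (a : lp (fun _ : ℤ ↦ ℂ) 2) (m : ℤ) :
      HasSum (fun n : ℤ ↦ a n / ((m : ℂ) - n + p)) (laurentOperator (hmem.toLp _) a m) := by
    simpa only [fourierCoeff_congr_ae hmem.coeFn_toLp, fourierCoeff_discreteHilbertSymbol hp,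
      Int.cast_sub, ← div_eq_mul_inv] using hasSum_laurentOperator (hmem.toLp _) a m
  have hmod : ∀ᵐ x ∂haarAddCircle, ‖(hmem.toLp _) x‖ = ‖(π / Complex.sin (π * p) : ℂ)‖ := by
    filter_upwards [hmem.coeFn_toLp] with x hx
    rw [hx, norm_discreteHilbertSymbol_ofReal]
  refine ⟨fun a m ↦ (hsum a m).summable, laurentOperator (hmem.toLp _),
    fun a m ↦ (hsum a m).tsum_eq.symm, ?_⟩
  rw [norm_laurentOperator hmod]
  norm_cast
  rw [norm_div, Real.norm_of_nonneg Real.pi_nonneg, Real.norm_eq_abs]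

/-- For `p ∈ (0,1)` the regularized discrete Hilbert transform
`(H_p a)_m = Σ_{n ∈ ℤ} a_n/(m − n + p)` is a well-defined bounded linear operator on
`ℓ²(ℤ, ℂ)` with operator norm `π / sin(πp)`. -/
theorem regularized_discrete_hilbert_transform_norm (p : ℝ) (hp : p ∈ Set.Ioo (0:ℝ) 1) :
    (∀ (a : lp (fun _ : ℤ => ℂ) 2) (m : ℤ),
      Summable fun n : ℤ => a n / ((m : ℂ) - (n : ℂ) + (p : ℂ))) ∧
    ∃ T : lp (fun _ : ℤ => ℂ) 2 →L[ℂ] lp (fun _ : ℤ => ℂ) 2,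
      (∀ (a : lp (fun _ : ℤ => ℂ) 2) (m : ℤ),
        T a m = ∑' n : ℤ, a n / ((m : ℂ) - (n : ℂ) + (p : ℂ))) ∧
      ‖T‖ = Real.pi / Real.sin (Real.pi * p) := by
  have hsin : 0 < Real.sin (π * p) :=
    Real.sin_pos_of_mem_Ioo ⟨by nlinarith [Real.pi_pos, hp.1], by nlinarith [Real.pi_pos, hp.2]⟩
  simpa only [abs_of_pos hsin] using
    regularized_discrete_hilbert_transform_norm_general p
      (ofReal_mem_integerComplement_iff_sin_ne_zero.2 hsin.ne')
end
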